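/- arXiv:1309.3223 — 2 statements merged into one kernel-verified Lean document; each statement's English description precedes it below -/
import Mathlib

section
/- Let G=(V,E) be a finite weighted graph, 0 < ε ≤ 1, B ⊆ V, and let S be a nonempty subset of B with T = B∖S nonempty and vol(S) ≤ vol(B)/2. If e(S,B)·vol(B) ≥ (ε/3)·vol(T)·e(S,V∖B) and e(T,B)·vol(B) ≥ (ε/3)·vol(S)·e(T,V∖B), then e(S,B)/vol(S) ≥ (ε/7)·max{φ(S), φ(T)}; in particular the conductance of S inside the induced subgraph G[B] is at least (ε/7)·max{φ(S), φ(T)}. -/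
open Finset

/-- Weighted degree of a vertex. -/
noncomputable def deg {V : Type*} [Fintype V] (w : V → V → ℝ) (v : V) : ℝ :=
  ∑ u, w v u

/-- Volume of a set of vertices. -/
noncomputable def vol {V : Type*} [Fintype V] (w : V → V → ℝ) (S : Finset V) : ℝ :=
  ∑ v ∈ S, deg w v

/-- Total weight of edges from `S` to `T \ S`. -/
noncomputable def eW {V : Type*} [DecidableEq V] (w : V → V → ℝ) (S T : Finset V) : ℝ :=
  ∑ u ∈ S, ∑ v ∈ T \ S, w u v

/-- Conductance of `S` in `G`. -/
noncomputable def phi {V : Type*} [Fintype V] [DecidableEq V] (w : V → V → ℝ)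
    (S : Finset V) : ℝ :=
  eW w S Finset.univ / vol w S

/-- Volume of `S ⊆ P` inside the induced subgraph `G[P]`. -/
noncomputable def volIn {V : Type*} [DecidableEq V] (w : V → V → ℝ) (P S : Finset V) : ℝ :=
  ∑ v ∈ S, ∑ u ∈ P, w v u

/-- `φ(G[P]) ≥ a` : every nonempty proper `S ⊊ P` with at most half of the induced volume
has induced conductance at least `a` (stated multiplicatively). -/
def inCondGE {V : Type*} [DecidableEq V] (w : V → V → ℝ) (P : Finset V) (a : ℝ) : Prop :=
  ∀ S : Finset V, S ⊆ P → S.Nonempty → S ≠ P →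
    volIn w P S ≤ volIn w P P / 2 → a * volIn w P S ≤ eW w S P

/-- `ρ(k)`: the minimum over families of `k` pairwise disjoint nonempty subsets of the
maximum conductance. -/
noncomputable def rho {V : Type*} [Fintype V] [DecidableEq V] (w : V → V → ℝ) (k : ℕ) : ℝ :=
  sInf { r | ∃ A : Fin k → Finset V, (∀ i, (A i).Nonempty) ∧
    (∀ i j, i ≠ j → Disjoint (A i) (A j)) ∧ r = ⨆ i, phi w (A i) }

/-- The normalized Laplacian `I - D^{-1/2} A D^{-1/2}`. -/
noncomputable def normLap {V : Type*} [Fintype V] [DecidableEq V] (w : V → V → ℝ) : Matrix V V ℝ :=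
  1 - Matrix.of fun u v => w u v / (Real.sqrt (deg w u) * Real.sqrt (deg w v))

/-- `lam w k` is the `k`-th smallest eigenvalue (1-indexed) of the normalized Laplacian. -/
noncomputable def lam {V : Type*} [Fintype V] [DecidableEq V] (w : V → V → ℝ) (k : ℕ) : ℝ :=
  if h : (normLap w).IsHermitian then
    ((Finset.univ.val.map h.eigenvalues).sort (· ≤ ·)).getD (k - 1) 0
  else 0

/-!
Put `T = B \ S` and `δ = ε / 3`. For `X ∈ {S, T}` and `Y = B \ X`, splitting
`e(X, V) = e(X, B) + e(X, V \ B)` turns the hypothesis on `X` into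
`δ φ(X) ≤ (vol B + δ vol Y) e(X, B) / (vol X vol Y)`.
The cut `e(X, B)` and the product `vol X vol Y` are the same for `X = S` and for `X = T`. Since
`vol S ≤ vol T`, in both cases `vol B + δ vol Y ≤ (2 + δ) vol T`, so
`δ φ(X) ≤ (2 + δ) e(S, B) / vol S`. Finally `δ / (2 + δ) = ε / (6 + ε) ≥ ε / 7` because `ε ≤ 1`.
-/

theorem vol_nonneg {V : Type*} [Fintype V] {w : V → V → ℝ} (hnonneg : ∀ u v, 0 ≤ w u v)
    (S : Finset V) : 0 ≤ vol w S :=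
  sum_nonneg fun v _ => sum_nonneg fun u _ => hnonneg v u

section EdgeWeight

variable {V : Type*} [DecidableEq V] {w : V → V → ℝ} {B S : Finset V}

theorem eW_nonneg (hnonneg : ∀ u v, 0 ≤ w u v) (S T : Finset V) : 0 ≤ eW w S T :=
  sum_nonneg fun u _ => sum_nonneg fun v _ => hnonneg u v

theorem volIn_nonneg (hnonneg : ∀ u v, 0 ≤ w u v) (B S : Finset V) : 0 ≤ volIn w B S :=
  sum_nonneg fun v _ => sum_nonneg fun u _ => hnonneg v u

theorem eW_sdiff_left (hsym : ∀ u v, w u v = w v u) (hSB : S ⊆ B) :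
    eW w (B \ S) B = eW w S B := by
  rw [eW, eW, Finset.sdiff_sdiff_eq_self hSB, sum_comm]
  exact sum_congr rfl fun u _ => sum_congr rfl fun v _ => hsym v u

end EdgeWeight

section Conductance

variable {V : Type*} [Fintype V] [DecidableEq V] {w : V → V → ℝ} {B S T : Finset V} {δ : ℝ}

theorem vol_sdiff_add_vol (hSB : S ⊆ B) : vol w (B \ S) + vol w S = vol w B :=
  sum_sdiff hSB

theorem volIn_le_vol (hnonneg : ∀ u v, 0 ≤ w u v) (B S : Finset V) : volIn w B S ≤ vol w S :=
  sum_le_sum fun v _ => sum_le_univ_sum_of_nonneg (hnonneg v)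

theorem phi_nonneg (hnonneg : ∀ u v, 0 ≤ w u v) (S : Finset V) : 0 ≤ phi w S :=
  div_nonneg (eW_nonneg hnonneg _ _) (vol_nonneg hnonneg S)

theorem eW_add_eW_univ_sdiff (B S : Finset V) : eW w S B + eW w S (univ \ B) = eW w S univ := by
  have hdisj : Disjoint (B \ S) ((univ \ B) \ S) :=
    disjoint_sdiff.mono sdiff_subset sdiff_subset
  have hunion : B \ S ∪ (univ \ B) \ S = univ \ S := by
    rw [← union_sdiff_distrib, union_sdiff_of_subset (subset_univ B)]
  simp only [eW, ← sum_add_distrib, ← sum_union hdisj, hunion]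

theorem mul_phi_le_of_mul_eW_univ_sdiff_le (hS : 0 < vol w S) (hT : 0 < vol w T)
    (h : δ * vol w T * eW w S (univ \ B) ≤ eW w S B * vol w B) :
    δ * phi w S ≤ (vol w B + δ * vol w T) * eW w S B / (vol w S * vol w T) := by
  calc δ * phi w S
      = (δ * vol w T * eW w S B + δ * vol w T * eW w S (univ \ B)) / (vol w S * vol w T) := by
        rw [phi, ← eW_add_eW_univ_sdiff B S]
        field_simp
    _ ≤ (δ * vol w T * eW w S B + eW w S B * vol w B) / (vol w S * vol w T) := by
        gcongr
    _ = (vol w B + δ * vol w T) * eW w S B / (vol w S * vol w T) := by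
        ring

theorem mul_max_phi_le (hsym : ∀ u v, w u v = w v u) (hnonneg : ∀ u v, 0 ≤ w u v) (hδ : 0 ≤ δ)
    (hSB : S ⊆ B) (hS : 0 < vol w S) (hvol : vol w S ≤ vol w B / 2)
    (h1 : δ * vol w (B \ S) * eW w S (univ \ B) ≤ eW w S B * vol w B)
    (h2 : δ * vol w S * eW w (B \ S) (univ \ B) ≤ eW w (B \ S) B * vol w B) :
    δ * max (phi w S) (phi w (B \ S)) ≤ (2 + δ) * (eW w S B / vol w S) := by
  have hsum : vol w (B \ S) + vol w S = vol w B := vol_sdiff_add_vol hSB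
  have hST : vol w S ≤ vol w (B \ S) := by linarith
  have hT : 0 < vol w (B \ S) := hS.trans_le hST
  have hcut : 0 ≤ eW w S B := eW_nonneg hnonneg S B
  have hbound {y : ℝ} (hy : y ≤ vol w (B \ S)) :
      (vol w B + δ * y) * eW w S B / (vol w S * vol w (B \ S)) ≤
        (2 + δ) * (eW w S B / vol w S) := by
    calc (vol w B + δ * y) * eW w S B / (vol w S * vol w (B \ S))
        ≤ (2 * vol w (B \ S) + δ * vol w (B \ S)) * eW w S B / (vol w S * vol w (B \ S)) := by
          gcongr
          linarith
      _ = (2 + δ) * (eW w S B / vol w S) := by field_simp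
  rw [mul_max_of_nonneg _ _ hδ]
  apply max_le
  · exact (mul_phi_le_of_mul_eW_univ_sdiff_le hS hT h1).trans (hbound le_rfl)
  · have hphi := mul_phi_le_of_mul_eW_univ_sdiff_le hT hS h2
    rw [eW_sdiff_left hsym hSB, mul_comm (vol w (B \ S))] at hphi
    exact hphi.trans (hbound hST)

theorem mul_volIn_le_of_le_eW_div_vol {c : ℝ} (hnonneg : ∀ u v, 0 ≤ w u v) (hc : 0 ≤ c)
    (hS : 0 < vol w S) (h : c ≤ eW w S B / vol w S) : c * volIn w B S ≤ eW w S B :=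
  (mul_le_mul_of_nonneg_left (volIn_le_vol hnonneg B S) hc).trans ((le_div_iff₀ hS).mp h)

theorem stmt9_general (hsym : ∀ u v, w u v = w v u) (hnonneg : ∀ u v, 0 ≤ w u v) (hδ : 0 ≤ δ)
    (hSB : S ⊆ B) (hS : 0 < vol w S) (hvol : vol w S ≤ vol w B / 2)
    (h1 : δ * vol w (B \ S) * eW w S (univ \ B) ≤ eW w S B * vol w B)
    (h2 : δ * vol w S * eW w (B \ S) (univ \ B) ≤ eW w (B \ S) B * vol w B) :
    δ / (2 + δ) * max (phi w S) (phi w (B \ S)) ≤ eW w S B / vol w S ∧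
    δ / (2 + δ) * max (phi w S) (phi w (B \ S)) * volIn w B S ≤ eW w S B := by
  have hmax : 0 ≤ max (phi w S) (phi w (B \ S)) := le_max_of_le_left (phi_nonneg hnonneg S)
  have hmain : δ / (2 + δ) * max (phi w S) (phi w (B \ S)) ≤ eW w S B / vol w S := by
    rw [div_mul_eq_mul_div, div_le_iff₀' (by positivity)]
    exact mul_max_phi_le hsym hnonneg hδ hSB hS hvol h1 h2
  exact ⟨hmain, mul_volIn_le_of_le_eW_div_vol hnonneg (by positivity) hS hmain⟩

end Conductance

theorem stmt9 {V : Type*} [Fintype V] [DecidableEq V] (w : V → V → ℝ)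
    (hsym : ∀ u v, w u v = w v u) (hnonneg : ∀ u v, 0 ≤ w u v)
    (hdeg : ∀ v, 0 < deg w v)
    (ε : ℝ) (hε0 : 0 < ε) (hε1 : ε ≤ 1)
    (B S : Finset V) (hSB : S ⊆ B) (hSne : S.Nonempty) (hTne : (B \ S).Nonempty)
    (hvol : vol w S ≤ vol w B / 2)
    (h1 : ε / 3 * vol w (B \ S) * eW w S (Finset.univ \ B) ≤ eW w S B * vol w B)
    (h2 : ε / 3 * vol w S * eW w (B \ S) (Finset.univ \ B) ≤ eW w (B \ S) B * vol w B) :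
    ε / 7 * max (phi w S) (phi w (B \ S)) ≤ eW w S B / vol w S ∧
    ε / 7 * max (phi w S) (phi w (B \ S)) * volIn w B S ≤ eW w S B := by
  have hmax : 0 ≤ max (phi w S) (phi w (B \ S)) := le_max_of_le_left (phi_nonneg hnonneg S)
  have hconst : ε / 7 ≤ ε / 3 / (2 + ε / 3) := by
    rw [le_div_iff₀ (by positivity)]
    nlinarith
  have hle := mul_le_mul_of_nonneg_right hconst hmax
  have hS : 0 < vol w S := sum_pos (fun v _ => hdeg v) hSne
  obtain ⟨hcond, hind⟩ := stmt9_general hsym hnonneg (by positivity) hSB hS hvol h1 h2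
  exact ⟨hle.trans hcond,
    (mul_le_mul_of_nonneg_right hle (volIn_nonneg hnonneg B S)).trans hind⟩
end

section
/- There is a universal constant C > 0 such that the following holds. Let G=(V,E) be a finite weighted graph and k ≥ 2 an integer with λ_k > 0. Then there exists an integer ℓ with 1 ≤ ℓ < k and a partition of V into nonempty sets P_1,…,P_ℓ such that for every 1 ≤ i ≤ ℓ: φ(G[P_i]) ≥ λ_k²/(78400·k⁴) and φ_G(P_i) ≤ C·k⁶·√λ_{k−1}. -/
open Finset

/-!
Write `ρ(j)` for the least `r` such that `j` disjoint nonempty sets all have conductance at most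
`r`. The easy direction of Cheeger's inequality gives `ρ(k) ≥ λ_k / 2`, while `ρ(1) = 0`, so
`ρ(ℓ + 1) - ρ(ℓ)` is essentially at least a multiple of `λ_k / k` for some `ℓ < k`. Choose a family
of `ℓ` disjoint sets realizing `ρ(ℓ)` up to this gap, minimal under inclusion. A cheap cut of a
member would produce either a smaller member or `ℓ + 1` sparse sets; so the members expand inside.
Distribute the remaining vertices over the members so as to maximize the weight inside the classes.
Every set `T` of distributed vertices is then attached to its own class by at least `1 / ℓ` of its
boundary, and this boundary is at least `ρ(ℓ + 1) vol T`, since otherwise `T` could be added to the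
family. Hence the classes still expand, and their conductance exceeds that of the members by at most
the factor `ℓ`.

It remains to bound `ρ(ℓ) ≤ ρ(k - 1)` by `√λ_{k-1}`, which is the higher-order Cheeger inequality
for `m = k - 1`. The first `m` eigenfunctions embed the vertices into `ℝ^m` in isotropic position,
so that the vectors pointing in a given narrow range of directions carry at most about one `m`-th of
the mass. A randomly shifted grid on the sphere, whose walls are thickened at small expense, thus
splits the embedding into `m` well-separated clusters of large mass. Cutting off the embedding
outside these clusters gives `m` disjointly supported functions of Rayleigh quotient polynomial in
`m` times `λ_m`, and Cheeger rounding turns each of them into a sparse set.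
-/

/-! ### Weights between vertex sets -/

/-- The weight `w(S, T)` of all ordered pairs in `S × T`; unlike in `eW`, the sets may overlap.
The identities `vol w S = w(S, univ)`, `eW w S T = w(S, T \ S)` and `volIn w P S = w(S, P)` all
hold by `rfl`. -/
noncomputable def pairWeight {V : Type*} (w : V → V → ℝ) (S T : Finset V) : ℝ :=
  ∑ u ∈ S, ∑ v ∈ T, w u v

section PairWeight

variable {V : Type*} {w : V → V → ℝ}

lemma pairWeight_comm (hsymm : ∀ u v, w u v = w v u) (S T : Finset V) :
    pairWeight w S T = pairWeight w T S :=
  sum_comm.trans <| sum_congr rfl fun _ _ => sum_congr rfl fun _ _ => hsymm _ _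

lemma pairWeight_nonneg (hnonneg : ∀ u v, 0 ≤ w u v) (S T : Finset V) : 0 ≤ pairWeight w S T :=
  sum_nonneg fun _ _ => sum_nonneg fun _ _ => hnonneg _ _

lemma pairWeight_mono (hnonneg : ∀ u v, 0 ≤ w u v) {S S' T T' : Finset V} (hS : S ⊆ S')
    (hT : T ⊆ T') : pairWeight w S T ≤ pairWeight w S' T' :=
  (sum_le_sum fun _ _ => sum_le_sum_of_subset_of_nonneg hT fun _ _ _ =>
    hnonneg _ _).trans <|
    sum_le_sum_of_subset_of_nonneg hS fun _ _ _ => sum_nonneg fun _ _ => hnonneg _ _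

@[simp]
lemma pairWeight_empty_left (T : Finset V) : pairWeight w ∅ T = 0 := sum_empty

@[simp]
lemma pairWeight_empty_right (S : Finset V) : pairWeight w S ∅ = 0 :=
  sum_eq_zero fun _ _ => sum_empty

lemma pairWeight_union_left [DecidableEq V] {S S' : Finset V} (h : Disjoint S S') (T : Finset V) :
    pairWeight w (S ∪ S') T = pairWeight w S T + pairWeight w S' T :=
  sum_union h

lemma pairWeight_union_right [DecidableEq V] (S : Finset V) {T T' : Finset V} (h : Disjoint T T') :
    pairWeight w S (T ∪ T') = pairWeight w S T + pairWeight w S T' :=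
  (sum_congr rfl fun _ _ => sum_union h).trans sum_add_distrib

lemma pairWeight_union_self [DecidableEq V] (hsymm : ∀ u v, w u v = w v u) {S T : Finset V}
    (h : Disjoint S T) :
    pairWeight w (S ∪ T) (S ∪ T) =
      pairWeight w S S + 2 * pairWeight w S T + pairWeight w T T := by
  rw [pairWeight_union_left h, pairWeight_union_right S h, pairWeight_union_right T h,
    pairWeight_comm hsymm T S]
  ring

variable [Fintype V]

lemma vol_pos (hdeg : ∀ v, 0 < deg w v) {S : Finset V} (h : S.Nonempty) : 0 < vol w S :=
  sum_pos (fun v _ => hdeg v) h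

variable [DecidableEq V]

lemma vol_union {S T : Finset V} (h : Disjoint S T) : vol w (S ∪ T) = vol w S + vol w T :=
  sum_union h

lemma eW_univ_eq_pairWeight_compl (S : Finset V) : eW w S univ = pairWeight w S Sᶜ := by
  rw [compl_eq_univ_sdiff]
  rfl

lemma pairWeight_compl_le_vol (hnonneg : ∀ u v, 0 ≤ w u v) (S : Finset V) :
    pairWeight w S Sᶜ ≤ vol w S :=
  pairWeight_mono hnonneg subset_rfl (subset_univ _)

lemma pairWeight_compl_eq_add {S T : Finset V} (h : Disjoint S T) :
    pairWeight w S Sᶜ = pairWeight w S T + pairWeight w S (S ∪ T)ᶜ := by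
  have hdisj : Disjoint T (S ∪ T)ᶜ :=
    disjoint_compl_right.mono_left subset_union_right
  rw [← pairWeight_union_right S hdisj]
  congr 1
  ext v
  have hv : v ∈ S → v ∉ T := fun hS => disjoint_left.1 h hS
  simp only [mem_compl, mem_union]
  tauto

lemma pairWeight_union_compl {S T : Finset V} (h : Disjoint S T) :
    pairWeight w (S ∪ T) (S ∪ T)ᶜ =
      pairWeight w S (S ∪ T)ᶜ + pairWeight w T (S ∪ T)ᶜ :=
  pairWeight_union_left h _

end PairWeight

/-! ### Sparse families -/

/-- A family of pairwise disjoint nonempty vertex sets of conductance at most `r`; the conductance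
bound is stated multiplicatively. -/
structure IsSparseFamily {V ι : Type*} [Fintype V] [DecidableEq V] (w : V → V → ℝ) (r : ℝ)
    (A : ι → Finset V) : Prop where
  nonempty (i : ι) : (A i).Nonempty
  disjoint : Pairwise fun i j => Disjoint (A i) (A j)
  sparse (i : ι) : pairWeight w (A i) (A i)ᶜ ≤ r * vol w (A i)

/-- `HasSparseFamily w m r` says that the higher-order conductance `ρ(m)` of the graph is at most
`r`: some `m` disjoint nonempty sets all have conductance at most `r`. -/
def HasSparseFamily {V : Type*} [Fintype V] [DecidableEq V] (w : V → V → ℝ) (m : ℕ) (r : ℝ) :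
    Prop :=
  ∃ A : Fin m → Finset V, IsSparseFamily w r A

section SparseFamily

variable {V ι : Type*} [Fintype V] [DecidableEq V] {w : V → V → ℝ} {r r' : ℝ}

lemma IsSparseFamily.mono (hdeg : ∀ v, 0 < deg w v) {A : ι → Finset V}
    (hA : IsSparseFamily w r A) (h : r ≤ r') : IsSparseFamily w r' A where
  nonempty := hA.nonempty
  disjoint := hA.disjoint
  sparse i := (hA.sparse i).trans <|
    mul_le_mul_of_nonneg_right h (vol_pos hdeg (hA.nonempty i)).le

lemma IsSparseFamily.comp_injective {κ : Type*} {A : ι → Finset V} (hA : IsSparseFamily w r A)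
    {f : κ → ι} (hf : f.Injective) : IsSparseFamily w r (A ∘ f) where
  nonempty i := hA.nonempty (f i)
  disjoint := hA.disjoint.comp_of_injective hf
  sparse i := hA.sparse (f i)

lemma IsSparseFamily.cons {m : ℕ} {A : Fin m → Finset V} (hA : IsSparseFamily w r A)
    {B : Finset V} (hB : B.Nonempty) (hdisj : ∀ i, Disjoint (A i) B)
    (hsparse : pairWeight w B Bᶜ ≤ r * vol w B) :
    IsSparseFamily w r (Fin.cons B A : Fin (m + 1) → Finset V) where
  nonempty := Fin.forall_fin_succ.2 ⟨hB, hA.nonempty⟩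
  disjoint := (pairwise_fin_succ_iff ..).2 ⟨fun i => hdisj i, fun i => (hdisj i).symm, hA.disjoint⟩
  sparse := Fin.forall_fin_succ.2 ⟨hsparse, hA.sparse⟩

lemma IsSparseFamily.update [DecidableEq ι] {A : ι → Finset V} (hA : IsSparseFamily w r A) {i : ι}
    {S : Finset V} (hS : S ⊆ A i) (hne : S.Nonempty)
    (hsparse : pairWeight w S Sᶜ ≤ r * vol w S) :
    IsSparseFamily w r (Function.update A i S) where
  nonempty := Function.forall_update_iff A (fun _ B => B.Nonempty) |>.2
    ⟨hne, fun j _ => hA.nonempty j⟩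
  disjoint := hA.disjoint.mono fun a b h =>
    h.mono (update_le_self_iff.2 hS a) (update_le_self_iff.2 hS b)
  sparse := Function.forall_update_iff A (fun _ B => pairWeight w B Bᶜ ≤ r * vol w B) |>.2
    ⟨hsparse, fun j _ => hA.sparse j⟩

lemma HasSparseFamily.mono_left {m n : ℕ} (h : m ≤ n) (hn : HasSparseFamily w n r) :
    HasSparseFamily w m r :=
  let ⟨_, hA⟩ := hn
  ⟨_, hA.comp_injective (Fin.castLE_injective h)⟩

lemma HasSparseFamily.mono_right (hdeg : ∀ v, 0 < deg w v) {m : ℕ} (h : r ≤ r')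
    (hm : HasSparseFamily w m r) : HasSparseFamily w m r' :=
  let ⟨A, hA⟩ := hm
  ⟨A, hA.mono hdeg h⟩

lemma hasSparseFamily_one [Nonempty V] (hdeg : ∀ v, 0 < deg w v) (hr : 0 ≤ r) :
    HasSparseFamily w 1 r :=
  ⟨fun _ => univ, fun _ => univ_nonempty, Subsingleton.pairwise, fun _ => by
    simpa using mul_nonneg hr (vol_pos hdeg univ_nonempty).le⟩

lemma hasSparseFamily_of_le_card (hnonneg : ∀ u v, 0 ≤ w u v) {m : ℕ} (hm : m ≤ Fintype.card V) :
    HasSparseFamily w m 1 :=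
  ⟨fun i => {(Fintype.equivFin V).symm (Fin.castLE hm i)}, fun _ => singleton_nonempty _,
    fun _ _ hij => by simpa using hij,
    fun _ => by simpa using pairWeight_compl_le_vol hnonneg _⟩

end SparseFamily

/-! ### Expanding cores -/

section Core

variable {V : Type*} [Fintype V] [DecidableEq V] {w : V → V → ℝ} {σ ρ α : ℝ}

/-- The cut of `Y` differs from that of `X ∪ Y` by `2 w(X, Y)` minus the cut of `X`. -/
lemma sparse_right_of_sparse_union (hsymm : ∀ u v, w u v = w v u) {X Y : Finset V}
    (hXY : Disjoint X Y) (hα : 2 * α ≤ ρ - σ) (hvol : 0 ≤ vol w X)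
    (hunion : pairWeight w (X ∪ Y) (X ∪ Y)ᶜ ≤ σ * vol w (X ∪ Y))
    (hX : ρ * vol w X < pairWeight w X Xᶜ) (hcut : pairWeight w X Y ≤ α * vol w X) :
    pairWeight w Y Yᶜ ≤ σ * vol w Y := by
  rw [pairWeight_compl_eq_add hXY] at hX
  rw [pairWeight_compl_eq_add hXY.symm, pairWeight_comm hsymm Y X, union_comm Y X]
  rw [pairWeight_union_compl hXY, vol_union hXY] at hunion
  linarith [mul_le_mul_of_nonneg_right hα hvol]

/-- Otherwise both parts of `A i` could be used, giving a sparse family with one more member. -/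
lemma IsSparseFamily.lt_cut_or_lt_cut_of_not_hasSparseFamily {m : ℕ} {A : Fin m → Finset V}
    (hA : IsSparseFamily w ρ A) (hmax : ¬ HasSparseFamily w (m + 1) ρ) {i : Fin m} {X Y : Finset V}
    (hX : X.Nonempty) (hY : Y.Nonempty) (hXY : Disjoint X Y) (hunion : X ∪ Y = A i) :
    ρ * vol w X < pairWeight w X Xᶜ ∨ ρ * vol w Y < pairWeight w Y Yᶜ := by
  by_contra! h
  have hXA : X ⊆ A i := hunion ▸ subset_union_left
  have hYA : Y ⊆ A i := hunion ▸ subset_union_right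
  refine hmax ⟨_, (hA.update hXA hX h.1).cons hY ?_ h.2⟩
  exact Function.forall_update_iff A (fun _ B => Disjoint B Y) |>.2
    ⟨hXY, fun j hj => (hA.disjoint hj).mono_right hYA⟩

/-- A minimal sparse family works: a cheap cut of `A i` into two parts would leave one of them
sparse, and `A i` could be replaced by it. -/
lemma exists_isSparseFamily_expanding (hsymm : ∀ u v, w u v = w v u) (hdeg : ∀ v, 0 < deg w v)
    {m : ℕ} (hα0 : 0 ≤ α) (hα : 2 * α ≤ ρ - σ) (hm : HasSparseFamily w m σ)
    (hmax : ¬ HasSparseFamily w (m + 1) ρ) :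
    ∃ A : Fin m → Finset V, IsSparseFamily w σ A ∧
      ∀ i, ∀ S ⊆ A i, vol w S ≤ vol w (A i \ S) → α * vol w S ≤ pairWeight w S (A i \ S) := by
  obtain ⟨A, hA⟩ := (Set.toFinite {A : Fin m → Finset V | IsSparseFamily w σ A}).exists_minimal hm
  refine ⟨A, hA.prop, fun i S hS hvol => ?_⟩
  by_contra! hcut
  have hSne : S.Nonempty := by
    rw [nonempty_iff_ne_empty]
    rintro rfl
    simp [vol] at hcut
  have hvolS := vol_pos hdeg hSne
  have hTne : (A i \ S).Nonempty := by
    rw [nonempty_iff_ne_empty]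
    intro h
    rw [h] at hvol
    exact absurd hvol (by simpa [vol] using hvolS)
  have hminimal : ∀ B ⊂ A i, B.Nonempty → ¬ pairWeight w B Bᶜ ≤ σ * vol w B :=
    fun B hB hne hsparse =>
      hA.not_prop_of_lt (update_lt_self_iff.2 hB) (hA.prop.update hB.1 hne hsparse)
  have hdisj : Disjoint S (A i \ S) := disjoint_sdiff
  have hunion : S ∪ A i \ S = A i := union_sdiff_of_subset hS
  have hsparse := hA.prop.sparse i
  rw [← hunion] at hsparse
  rcases (hA.prop.mono hdeg (by linarith)).lt_cut_or_lt_cut_of_not_hasSparseFamily hmax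
    hSne hTne hdisj hunion with h | h
  · exact hminimal _ (sdiff_ssubset hS hSne) hTne <|
      sparse_right_of_sparse_union hsymm hdisj hα hvolS.le hsparse h hcut.le
  · rw [union_comm] at hsparse
    refine hminimal S (hS.ssubset_of_ne ?_) hSne <|
      sparse_right_of_sparse_union hsymm hdisj.symm hα (vol_pos hdeg hTne).le
        hsparse h ?_
    · rintro rfl
      simp at hTne
    · rw [pairWeight_comm hsymm]
      exact hcut.le.trans (mul_le_mul_of_nonneg_left hvol hα0)

end Core

/-! ### Extending a sparse family to a partition -/

/-- The class of label `i` in the partition of the vertex set given by the labelling `c`. -/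
def labelClass {V ι : Type*} [Fintype V] [DecidableEq ι] (c : V → ι) (i : ι) : Finset V :=
  {v | c v = i}

section Labelling

variable {V ι : Type*} [Fintype V] [DecidableEq ι] {w : V → V → ℝ} {c : V → ι} {i j : ι}

@[simp]
lemma mem_labelClass {v : V} : v ∈ labelClass c i ↔ c v = i := by simp [labelClass]

lemma disjoint_labelClass (h : i ≠ j) : Disjoint (labelClass c i) (labelClass c j) :=
  disjoint_filter.2 fun _ _ hi hj => h (hi.symm.trans hj)

lemma exists_labelling_extending [Nonempty ι] {A : ι → Finset V}
    (hA : Pairwise fun i j => Disjoint (A i) (A j)) : ∃ c : V → ι, ∀ i, A i ⊆ labelClass c i := by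
  have hlabel : ∀ v, ∃ i, ∀ j, v ∈ A j → j = i := by
    intro v
    by_cases h : ∃ i, v ∈ A i
    · obtain ⟨i, hi⟩ := h
      exact ⟨i, fun j hj => hA.eq fun hji => disjoint_left.1 hji hj hi⟩
    · exact ⟨Classical.arbitrary ι, fun j hj => absurd ⟨j, hj⟩ h⟩
  choose c hc using hlabel
  exact ⟨c, fun i v hv => mem_labelClass.2 (hc v i hv).symm⟩

variable [DecidableEq V] {S : Finset V}

lemma labelClass_piecewise_const (hij : i ≠ j) (hS : S ⊆ labelClass c i) (l : ι) :
    labelClass (S.piecewise (fun _ => j) c) l =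
      if l = i then labelClass c i \ S else if l = j then labelClass c j ∪ S
        else labelClass c l := by
  ext v
  have hv : v ∈ S → c v = i := fun h => mem_labelClass.1 (hS h)
  by_cases hvS : v ∈ S <;> split_ifs with h₁ h₂ <;> simp_all [eq_comm]

/-- The total weight inside the classes of a labelling, which is large when the classes are
separated by a small cut. -/
noncomputable def internalWeight [Fintype ι] (w : V → V → ℝ) (c : V → ι) : ℝ :=
  ∑ i, pairWeight w (labelClass c i) (labelClass c i)

variable [Fintype ι]

lemma internalWeight_piecewise_const (hsymm : ∀ u v, w u v = w v u) (hij : i ≠ j)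
    (hS : S ⊆ labelClass c i) :
    internalWeight w (S.piecewise (fun _ => j) c) = internalWeight w c +
      2 * (pairWeight w S (labelClass c j) - pairWeight w S (labelClass c i \ S)) := by
  rw [← sub_eq_iff_eq_add', internalWeight, internalWeight, ← sum_sub_distrib,
    Fintype.sum_eq_add i j hij]
  · have hi := pairWeight_union_self hsymm (disjoint_sdiff (s := S) (t := labelClass c i))
    have hj := pairWeight_union_self hsymm ((disjoint_labelClass (c := c) hij).mono_left hS)
    rw [union_sdiff_of_subset hS] at hi
    rw [union_comm] at hj
    simp only [labelClass_piecewise_const hij hS, if_true, if_neg hij.symm]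
    linarith
  · rintro l ⟨hli, hlj⟩
    simp only [labelClass_piecewise_const hij hS, if_neg hli, if_neg hlj, sub_self]

lemma pairWeight_compl_eq_sum_labelClass (w : V → V → ℝ) (c : V → ι) (S : Finset V) :
    pairWeight w S Sᶜ = ∑ i, pairWeight w S (labelClass c i \ S) := by
  refine Eq.trans (sum_congr rfl fun u _ => ?_) sum_comm
  rw [← sum_fiberwise Sᶜ c]
  refine sum_congr rfl fun i _ => sum_congr ?_ fun _ _ => rfl
  ext v
  simp [and_comm]

/-- Among the labellings extending `A`, take one of maximal internal weight: moving `S` from its own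
class to another cannot increase the internal weight. -/
lemma exists_labelling_pairWeight_compl_le [Nonempty ι] (hsymm : ∀ u v, w u v = w v u)
    {A : ι → Finset V} (hA : Pairwise fun i j => Disjoint (A i) (A j)) :
    ∃ c : V → ι, (∀ i, A i ⊆ labelClass c i) ∧ ∀ i, ∀ S ⊆ labelClass c i \ A i,
      pairWeight w S Sᶜ ≤ Fintype.card ι * pairWeight w S (labelClass c i \ S) := by
  obtain ⟨c, hc, hmax⟩ := Set.exists_max_image {c : V → ι | ∀ i, A i ⊆ labelClass c i}
    (internalWeight w) (Set.toFinite _) (exists_labelling_extending hA)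
  refine ⟨c, hc, fun i S hS => ?_⟩
  have hSi : S ⊆ labelClass c i := hS.trans sdiff_subset
  have hother (j : ι) :
      pairWeight w S (labelClass c j \ S) ≤ pairWeight w S (labelClass c i \ S) := by
    rcases eq_or_ne i j with rfl | hij
    · rfl
    rw [sdiff_eq_self_of_disjoint ((disjoint_labelClass hij.symm).mono_right hSi)]
    have hextends : ∀ l, A l ⊆ labelClass (S.piecewise (fun _ => j) c) l := by
      intro l v hv
      have hvS : v ∉ S := by
        intro hvS
        obtain rfl : l = i :=
          (mem_labelClass.1 (hc l hv)).symm.trans (mem_labelClass.1 (hSi hvS))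
        exact (mem_sdiff.1 (hS hvS)).2 hv
      simpa [hvS] using hc l hv
    have := hmax _ hextends
    rw [internalWeight_piecewise_const hsymm hij hSi] at this
    linarith
  rw [pairWeight_compl_eq_sum_labelClass w c S]
  exact (sum_le_card_nsmul _ _ _ fun j _ => hother j).trans_eq (by simp)

end Labelling

section Conductance

variable {V : Type*} [DecidableEq V] {w : V → V → ℝ} {A P : Finset V} {a b α ρ σ L : ℝ}

lemma inCondGE.mono (hnonneg : ∀ u v, 0 ≤ w u v) (h : inCondGE w P b) (hab : a ≤ b) :
    inCondGE w P a := fun S hSP hS hne hhalf =>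
  (mul_le_mul_of_nonneg_right hab (pairWeight_nonneg hnonneg S P)).trans (h S hSP hS hne hhalf)

variable [Fintype V]

/-- With `B = S ∩ A`, `T = S \ A` and `x = w(S, P \ S)`, expansion of `A` gives `α vol B ≤ x`, and
attachment of `T` gives `ρ vol T ≤ L (x + vol B)`. -/
lemma mul_vol_le_pairWeight_sdiff (hsymm : ∀ u v, w u v = w v u) (hnonneg : ∀ u v, 0 ≤ w u v)
    (hAP : A ⊆ P) (hα0 : 0 ≤ α) (hα1 : α ≤ 1) (hρ1 : ρ ≤ 1) (hL : 1 ≤ L)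
    (hexpand : ∀ S ⊆ A, vol w S ≤ vol w (A \ S) → α * vol w S ≤ pairWeight w S (A \ S))
    (hattach : ∀ T ⊆ P \ A, ρ * vol w T ≤ L * pairWeight w T (P \ T))
    {S : Finset V} (hSP : S ⊆ P) (hvol : vol w (S ∩ A) ≤ vol w (A \ S)) :
    α * ρ / (3 * L) * vol w S ≤ pairWeight w S (P \ S) := by
  set x := pairWeight w S (P \ S)
  have hx0 : 0 ≤ x := pairWeight_nonneg hnonneg _ _
  have hinner : α * vol w (S ∩ A) ≤ x := by
    have hdiff : A \ (S ∩ A) = A \ S := sdiff_inter_self_right A S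
    have := hexpand (S ∩ A) inter_subset_right (hdiff ▸ hvol)
    rw [hdiff] at this
    exact this.trans (pairWeight_mono hnonneg inter_subset_left
      (sdiff_subset_sdiff hAP subset_rfl))
  have houter : ρ * vol w (S \ A) ≤ L * (x + vol w (S ∩ A)) := by
    have hdiff : P \ (S \ A) = P \ S ∪ S ∩ A := by
      ext v
      have := @hSP v
      have := @hAP v
      simp only [mem_union, mem_sdiff, mem_inter]
      tauto
    have hdisj : Disjoint (P \ S) (S ∩ A) :=
      sdiff_disjoint.mono_right inter_subset_left
    refine (hattach (S \ A) (sdiff_subset_sdiff hSP subset_rfl)).trans ?_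
    rw [hdiff, pairWeight_union_right _ hdisj, pairWeight_comm hsymm _ (S ∩ A)]
    exact mul_le_mul_of_nonneg_left (add_le_add
      (pairWeight_mono hnonneg sdiff_subset subset_rfl)
      (pairWeight_mono hnonneg subset_rfl (subset_univ _))) (zero_le_one.trans hL)
  have hsplit : vol w S = vol w (S \ A) + vol w (S ∩ A) := by
    rw [← vol_union (disjoint_sdiff_inter S A), sdiff_union_inter]
  have h₁ := mul_le_mul_of_nonneg_left houter hα0
  have h₂ := mul_le_mul_of_nonneg_left hinner (zero_le_one.trans hL)
  have h₃ : α * (L * x) ≤ L * x := mul_le_of_le_one_left (by positivity) hα1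
  have h₄ : ρ * (α * vol w (S ∩ A)) ≤ α * vol w (S ∩ A) :=
    mul_le_of_le_one_left (mul_nonneg hα0 (pairWeight_nonneg hnonneg _ univ)) hρ1
  have h₅ : x ≤ L * x := le_mul_of_one_le_left hx0 hL
  rw [div_mul_eq_mul_div, div_le_iff₀ (by positivity), hsplit]
  linarith

lemma inCondGE_of_expanding_core (hsymm : ∀ u v, w u v = w v u) (hnonneg : ∀ u v, 0 ≤ w u v)
    (hAP : A ⊆ P) (hα0 : 0 ≤ α) (hα1 : α ≤ 1) (hρ0 : 0 ≤ ρ) (hρ1 : ρ ≤ 1) (hL : 1 ≤ L)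
    (hexpand : ∀ S ⊆ A, vol w S ≤ vol w (A \ S) → α * vol w S ≤ pairWeight w S (A \ S))
    (hattach : ∀ T ⊆ P \ A, ρ * vol w T ≤ L * pairWeight w T (P \ T)) :
    inCondGE w P (α * ρ / (3 * L)) := by
  intro S hSP _ _ hhalf
  change _ * pairWeight w S P ≤ pairWeight w S (P \ S)
  have hconst : 0 ≤ α * ρ / (3 * L) := by positivity
  have hle_vol (T : Finset V) : pairWeight w T P ≤ vol w T :=
    pairWeight_mono hnonneg subset_rfl (subset_univ _)
  rcases le_total (vol w (S ∩ A)) (vol w (A \ S)) with h | h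
  · exact (mul_le_mul_of_nonneg_left (hle_vol S) hconst).trans <|
      mul_vol_le_pairWeight_sdiff hsymm hnonneg hAP hα0 hα1 hρ1 hL hexpand hattach hSP h
  · have hcompl : (P \ S) ∩ A = A \ S := by
      rw [inter_comm, ← inter_sdiff_assoc, inter_eq_left.2 hAP]
    have hcompl' : A \ (P \ S) = S ∩ A := by
      ext v
      have := @hAP v
      simp only [mem_sdiff, mem_inter]
      tauto
    have hbound := mul_vol_le_pairWeight_sdiff hsymm hnonneg hAP hα0 hα1 hρ1 hL hexpand hattach
      (sdiff_subset (s := P) (t := S)) (by rwa [hcompl, hcompl'])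
    rw [Finset.sdiff_sdiff_eq_self hSP, pairWeight_comm hsymm] at hbound
    have hsplit : pairWeight w P P = pairWeight w S P + pairWeight w (P \ S) P := by
      rw [← pairWeight_union_left disjoint_sdiff, union_sdiff_of_subset hSP]
    have hhalf' : pairWeight w S P ≤ pairWeight w P P / 2 := hhalf
    refine (mul_le_mul_of_nonneg_left ?_ hconst).trans hbound
    linarith [hle_vol (P \ S)]

lemma phi_le_of_attached (hsymm : ∀ u v, w u v = w v u) (hnonneg : ∀ u v, 0 ≤ w u v)
    (hAP : A ⊆ P) (hP : 0 < vol w P) (hσ : 0 ≤ σ) (hL : 1 ≤ L)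
    (hsparse : pairWeight w A Aᶜ ≤ σ * vol w A)
    (hattach : pairWeight w (P \ A) (P \ A)ᶜ ≤ L * pairWeight w (P \ A) A) :
    phi w P ≤ L * σ := by
  have hdisj : Disjoint A (P \ A) := disjoint_sdiff
  have hunion : A ∪ P \ A = P := union_sdiff_of_subset hAP
  have hA := pairWeight_compl_eq_add (w := w) hdisj
  have hT := pairWeight_compl_eq_add (w := w) hdisj.symm
  have hcut := pairWeight_union_compl (w := w) hdisj
  rw [union_comm] at hT
  rw [hunion] at hA hT hcut
  rw [hT, pairWeight_comm hsymm _ A] at hattach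
  have hAA : pairWeight w A Pᶜ ≤ L * pairWeight w A Pᶜ :=
    le_mul_of_one_le_left (pairWeight_nonneg hnonneg _ _) hL
  rw [phi, div_le_iff₀ hP, eW_univ_eq_pairWeight_compl]
  calc pairWeight w P Pᶜ ≤ L * pairWeight w A Aᶜ := by
        rw [hA, hcut]
        linarith [pairWeight_nonneg hnonneg A (P \ A)]
    _ ≤ L * (σ * vol w P) := by
        refine mul_le_mul_of_nonneg_left (hsparse.trans ?_) (zero_le_one.trans hL)
        exact mul_le_mul_of_nonneg_left (pairWeight_mono hnonneg hAP subset_rfl) hσ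
    _ = L * σ * vol w P := (mul_assoc ..).symm

end Conductance

lemma exists_partition_of_conductance_gap {V : Type*} [Fintype V] [DecidableEq V] {w : V → V → ℝ}
    (hsymm : ∀ u v, w u v = w v u) (hnonneg : ∀ u v, 0 ≤ w u v) (hdeg : ∀ v, 0 < deg w v) {m : ℕ}
    (hm : m ≠ 0) {σ ρ α : ℝ} (hσ : 0 ≤ σ) (hα0 : 0 ≤ α) (hρ1 : ρ ≤ 1) (hα : 2 * α ≤ ρ - σ)
    (hsparse : HasSparseFamily w m σ) (hmax : ¬ HasSparseFamily w (m + 1) ρ) :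
    ∃ c : V → Fin m, ∀ i, (labelClass c i).Nonempty ∧
      inCondGE w (labelClass c i) (α * ρ / (3 * m)) ∧ phi w (labelClass c i) ≤ m * σ := by
  have : NeZero m := ⟨hm⟩
  have hm1 : (1 : ℝ) ≤ m := by exact_mod_cast Nat.one_le_iff_ne_zero.2 hm
  obtain ⟨A, hA, hexpand⟩ := exists_isSparseFamily_expanding hsymm hdeg hα0 hα hsparse hmax
  obtain ⟨c, hAc, hattach⟩ := exists_labelling_pairWeight_compl_le hsymm hA.disjoint
  simp only [Fintype.card_fin] at hattach
  have houtside : ∀ i, ∀ T ⊆ labelClass c i \ A i, ρ * vol w T ≤ pairWeight w T Tᶜ := by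
    intro i T hT
    rcases T.eq_empty_or_nonempty with rfl | hne
    · simp [vol]
    by_contra! h
    refine hmax ⟨_, (hA.mono hdeg (by linarith)).cons hne (fun j => ?_) h.le⟩
    rw [disjoint_right]
    intro v hvT hvj
    obtain ⟨hvi, hvA⟩ := mem_sdiff.1 (hT hvT)
    obtain rfl : j = i := (mem_labelClass.1 (hAc j hvj)).symm.trans (mem_labelClass.1 hvi)
    exact hvA hvj
  refine ⟨c, fun i => ?_⟩
  have hne : (labelClass c i).Nonempty := (hA.nonempty i).mono (hAc i)
  refine ⟨hne, ?_, ?_⟩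
  · exact inCondGE_of_expanding_core hsymm hnonneg (hAc i) hα0 (by linarith) (by linarith) hρ1 hm1
      (hexpand i) fun T hT => (houtside i T hT).trans (hattach i T hT)
  · refine phi_le_of_attached hsymm hnonneg (hAc i) (vol_pos hdeg hne) hσ hm1 (hA.sparse i) ?_
    simpa only [Finset.sdiff_sdiff_eq_self (hAc i)] using hattach i _ subset_rfl

/-! ### Dirichlet energy and the spectrum -/

/-- The Dirichlet energy of a function on the vertices, with values in a normed space so that it
applies to the spectral embedding as a whole. -/
noncomputable def energy {V E : Type*} [Fintype V] [SeminormedAddCommGroup E] (w : V → V → ℝ)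
    (f : V → E) : ℝ :=
  (1 / 2) * ∑ u, ∑ v, w u v * ‖f u - f v‖ ^ 2

/-- The squared norm of a vector-valued function in `ℓ²(V, deg)`. -/
noncomputable def degNormSq {V E : Type*} [Fintype V] [SeminormedAddCommGroup E] (w : V → V → ℝ)
    (f : V → E) : ℝ :=
  ∑ v, deg w v * ‖f v‖ ^ 2

/-- The inner product of `ℓ²(V, deg)`. -/
noncomputable def degInner {V : Type*} [Fintype V] (w : V → V → ℝ) (f g : V → ℝ) : ℝ :=
  ∑ v, deg w v * (f v * g v)

section Energy

variable {V : Type*} [Fintype V] {w : V → V → ℝ}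

lemma energy_real (w : V → V → ℝ) (f : V → ℝ) :
    energy w f = (1 / 2) * ∑ u, ∑ v, w u v * (f u - f v) ^ 2 := by
  simp only [energy, Real.norm_eq_abs, sq_abs]

lemma degNormSq_real (w : V → V → ℝ) (f : V → ℝ) :
    degNormSq w f = ∑ v, deg w v * f v ^ 2 := by
  simp only [degNormSq, Real.norm_eq_abs, sq_abs]

lemma degInner_self (w : V → V → ℝ) (f : V → ℝ) : degInner w f f = degNormSq w f := by
  simp only [degInner, degNormSq_real, sq]

lemma sum_sum_mul_add (hsymm : ∀ u v, w u v = w v u) (g : V → ℝ) :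
    ∑ u, ∑ v, w u v * (g u + g v) = 2 * ∑ v, deg w v * g v := by
  have hleft : ∑ u, ∑ v, w u v * g u = ∑ v, deg w v * g v := by
    simp only [deg, sum_mul]
  have hright : ∑ u, ∑ v, w u v * g v = ∑ v, deg w v * g v := by
    rw [sum_comm, ← hleft]
    simp only [hsymm]
  simp only [mul_add, sum_add_distrib, hleft, hright, two_mul]

lemma energy_eq_degNormSq_sub (hsymm : ∀ u v, w u v = w v u) (f : V → ℝ) :
    energy w f = degNormSq w f - ∑ u, ∑ v, w u v * (f u * f v) := by
  have hsum := sum_sum_mul_add hsymm fun v => f v ^ 2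
  have hexpand : ∑ u, ∑ v, w u v * (f u - f v) ^ 2 =
      ∑ u, ∑ v, w u v * (f u ^ 2 + f v ^ 2) - 2 * ∑ u, ∑ v, w u v * (f u * f v) := by
    simp only [mul_sum, ← sum_sub_distrib]
    exact sum_congr rfl fun u _ => sum_congr rfl fun v _ => by ring
  rw [energy_real, degNormSq_real, hexpand, hsum]
  ring

end Energy

lemma exists_equiv_sort_map {V α : Type*} [Fintype V] [LinearOrder α] (f : V → α) :
    ∃ e : Fin (Fintype.card V) ≃ V, Monotone (f ∘ e) ∧
      (univ.val.map f).sort (· ≤ ·) = List.ofFn (f ∘ e) := by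
  let e₀ := (Fintype.equivFin V).symm
  let e := (Tuple.sort (f ∘ e₀)).trans e₀
  have hmono : Monotone (f ∘ e) := Tuple.monotone_sort (f ∘ e₀)
  refine ⟨e, hmono, List.Perm.eq_of_pairwise' (r := (· ≤ ·)) (Multiset.pairwise_sort _ _)
    (List.sortedLE_ofFn_iff.2 hmono).pairwise ?_⟩
  rw [← Multiset.coe_eq_coe, Multiset.sort_eq, ← map_univ_equiv e, map_val,
    Multiset.map_map, List.ofFn_eq_map]
  rfl

lemma dotProduct_mulVec_eq_sum_eigenvalues {n : Type*} [Fintype n] [DecidableEq n]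
    {M : Matrix n n ℝ} (hM : M.IsHermitian) (g : EuclideanSpace ℝ n) :
    g.ofLp ⬝ᵥ M.mulVec g.ofLp =
      ∑ i, hM.eigenvalues i * inner ℝ (hM.eigenvectorBasis i) g ^ 2 := by
  have heigen (i : n) : inner ℝ (hM.eigenvectorBasis i) (M.toEuclideanLin g) =
      hM.eigenvalues i * inner ℝ (hM.eigenvectorBasis i) g := by
    have hMi : M.toEuclideanLin (hM.eigenvectorBasis i) =
        hM.eigenvalues i • hM.eigenvectorBasis i :=
      congrArg (WithLp.toLp 2) (hM.mulVec_eigenvectorBasis i)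
    rw [← Matrix.isSymmetric_toEuclideanLin_iff.2 hM, hMi, real_inner_smul_left]
  calc g.ofLp ⬝ᵥ M.mulVec g.ofLp = inner ℝ g (M.toEuclideanLin g) := by
        rw [EuclideanSpace.inner_eq_star_dotProduct, dotProduct_comm]
        rfl
    _ = ∑ i, hM.eigenvalues i * inner ℝ (hM.eigenvectorBasis i) g ^ 2 := by
        rw [← hM.eigenvectorBasis.sum_inner_mul_inner]
        refine sum_congr rfl fun i _ => ?_
        rw [heigen, real_inner_comm]
        ring

/-- A `deg`-orthonormal basis of eigenfunctions, with the `i`-th one belonging to `λ_{i+1}`; the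
basis property is recorded as Parseval's identity and the eigenvalue equations through the
diagonalization of the energy. -/
structure IsEigenbasis {V : Type*} [Fintype V] [DecidableEq V] (w : V → V → ℝ)
    (x : Fin (Fintype.card V) → V → ℝ) : Prop where
  orthonormal (i j) : degInner w (x i) (x j) = if i = j then 1 else 0
  degNormSq_eq (f : V → ℝ) : degNormSq w f = ∑ i, degInner w f (x i) ^ 2
  energy_eq (f : V → ℝ) : energy w f =
    ∑ i : Fin (Fintype.card V), lam w (i + 1) * degInner w f (x i) ^ 2

/-- The isometry of `ℓ²(V, deg)` onto the Euclidean space on which the normalized Laplacian acts. -/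
noncomputable def sqrtDegMul {V : Type*} [Fintype V] (w : V → V → ℝ) (f : V → ℝ) :
    EuclideanSpace ℝ V :=
  WithLp.toLp 2 fun v => √(deg w v) * f v

section Spectrum

variable {V : Type*} [Fintype V] {w : V → V → ℝ}

lemma inner_sqrtDegMul (hdeg : ∀ v, 0 < deg w v) (f g : V → ℝ) :
    inner ℝ (sqrtDegMul w f) (sqrtDegMul w g) = degInner w f g := by
  rw [PiLp.inner_apply]
  refine sum_congr rfl fun v _ => ?_
  simp only [sqrtDegMul, RCLike.inner_apply, conj_trivial]
  rw [mul_mul_mul_comm, Real.mul_self_sqrt (hdeg v).le, mul_comm (g v)]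

lemma sqrtDegMul_div (hdeg : ∀ v, 0 < deg w v) (b : EuclideanSpace ℝ V) :
    sqrtDegMul w (fun v => b v / √(deg w v)) = b := by
  ext v
  exact mul_div_cancel₀ _ (Real.sqrt_pos.2 (hdeg v)).ne'

variable [DecidableEq V]

lemma isHermitian_normLap (hsymm : ∀ u v, w u v = w v u) : (normLap w).IsHermitian := by
  refine Matrix.isHermitian_one.sub (Matrix.IsHermitian.ext fun u v => ?_)
  simp only [Matrix.of_apply, star_trivial, hsymm v u, mul_comm √(deg w v)]

lemma energy_eq_dotProduct_normLap (hsymm : ∀ u v, w u v = w v u) (hdeg : ∀ v, 0 < deg w v)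
    (f : V → ℝ) :
    energy w f = (sqrtDegMul w f).ofLp ⬝ᵥ (normLap w).mulVec (sqrtDegMul w f).ofLp := by
  have hsqrt (v : V) : √(deg w v) ≠ 0 := (Real.sqrt_pos.2 (hdeg v)).ne'
  rw [energy_eq_degNormSq_sub hsymm, normLap, Matrix.sub_mulVec, Matrix.one_mulVec, dotProduct_sub]
  congr 1
  · rw [← degInner_self, ← inner_sqrtDegMul hdeg, EuclideanSpace.inner_eq_star_dotProduct]
    rfl
  · simp only [dotProduct, Matrix.mulVec, Matrix.of_apply, sqrtDegMul, mul_sum]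
    refine sum_congr rfl fun u _ => sum_congr rfl fun v _ => ?_
    have := hsqrt u
    have := hsqrt v
    field_simp

lemma exists_equiv_lam_eq_eigenvalues (h : (normLap w).IsHermitian) :
    ∃ e : Fin (Fintype.card V) ≃ V, Monotone (h.eigenvalues ∘ e) ∧
      ∀ i : Fin (Fintype.card V), lam w (i + 1) = h.eigenvalues (e i) := by
  obtain ⟨e, hmono, hsort⟩ := exists_equiv_sort_map h.eigenvalues
  exact ⟨e, hmono, fun i => by rw [lam, dif_pos h, hsort]; simp⟩

lemma exists_isEigenbasis (hsymm : ∀ u v, w u v = w v u) (hdeg : ∀ v, 0 < deg w v) :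
    ∃ x, IsEigenbasis w x := by
  have h := isHermitian_normLap hsymm
  obtain ⟨e, -, hlam⟩ := exists_equiv_lam_eq_eigenvalues h
  let b := h.eigenvectorBasis
  let x (i : Fin (Fintype.card V)) (v : V) : ℝ := b (e i) v / √(deg w v)
  have hx (i) : sqrtDegMul w (x i) = b (e i) := sqrtDegMul_div hdeg _
  have hcoord (f i) : degInner w f (x i) = inner ℝ (b (e i)) (sqrtDegMul w f) := by
    rw [← inner_sqrtDegMul hdeg, hx, real_inner_comm]
  refine ⟨x, fun i j => ?_, fun f => ?_, fun f => ?_⟩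
  · rw [← inner_sqrtDegMul hdeg, hx, hx, orthonormal_iff_ite.1 b.orthonormal]
    simp only [e.injective.eq_iff]
  · simp only [hcoord]
    rw [e.sum_comp (fun v => inner ℝ (b v) (sqrtDegMul w f) ^ 2), b.sum_sq_inner_right,
      ← real_inner_self_eq_norm_sq, inner_sqrtDegMul hdeg, degInner_self]
  · simp only [hcoord, hlam]
    rw [e.sum_comp (fun v => h.eigenvalues v * inner ℝ (b v) (sqrtDegMul w f) ^ 2),
      energy_eq_dotProduct_normLap hsymm hdeg, dotProduct_mulVec_eq_sum_eigenvalues h]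

lemma lam_le_lam (hsymm : ∀ u v, w u v = w v u) {i j : ℕ} (hi : 1 ≤ i) (hij : i ≤ j)
    (hj : j ≤ Fintype.card V) : lam w i ≤ lam w j := by
  obtain ⟨e, hmono, hlam⟩ := exists_equiv_lam_eq_eigenvalues (isHermitian_normLap hsymm)
  obtain ⟨i, rfl⟩ := Nat.exists_eq_add_of_le' hi
  obtain ⟨j, rfl⟩ := Nat.exists_eq_add_of_le' (hi.trans hij)
  have hle : (⟨i, by omega⟩ : Fin (Fintype.card V)) ≤ ⟨j, by omega⟩ := Fin.mk_le_mk.2 (by omega)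
  simpa only [← hlam, Function.comp_apply] using hmono hle

lemma le_card_of_lam_pos {k : ℕ} (hk : 1 ≤ k) (h : 0 < lam w k) : k ≤ Fintype.card V := by
  by_contra! hcard
  unfold lam at h
  split_ifs at h with hH
  · rw [List.getD_eq_default _ _ (by simp; omega)] at h
    exact lt_irrefl _ h
  · exact lt_irrefl _ h

end Spectrum

section DisjointSupport

variable {V ι : Type*} {w : V → V → ℝ}

lemma subsingleton_support_apply {f : ι → V → ℝ}
    (hf : Pairwise fun i j => Disjoint (Function.support (f i)) (Function.support (f j))) (v : V) :
    (Function.support fun i => f i v).Subsingleton :=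
  fun _ hi _ hj => hf.eq (Set.not_disjoint_iff.2 ⟨v, hi, hj⟩)

variable [Fintype V]

lemma energy_smul (w : V → V → ℝ) (a : ℝ) (f : V → ℝ) :
    energy w (a • f) = a ^ 2 * energy w f := by
  simp only [energy_real, Pi.smul_apply, smul_eq_mul, ← mul_sub, mul_pow, mul_sum]
  exact sum_congr rfl fun u _ => sum_congr rfl fun v _ => by ring

lemma degNormSq_smul (w : V → V → ℝ) (a : ℝ) (f : V → ℝ) :
    degNormSq w (a • f) = a ^ 2 * degNormSq w f := by
  simp only [degNormSq_real, Pi.smul_apply, smul_eq_mul, mul_pow, mul_sum]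
  exact sum_congr rfl fun v _ => by ring

variable [Fintype ι]

lemma sq_sum_eq_of_subsingleton_support {p : ι → ℝ} (hp : (Function.support p).Subsingleton) :
    (∑ i, p i) ^ 2 = ∑ i, p i ^ 2 := by
  rcases hp.eq_empty_or_singleton with h | ⟨a, ha⟩
  · simp [Function.support_eq_empty_iff.1 h]
  · have hzero (i) (hi : i ≠ a) : p i = 0 := by
      rwa [← Function.notMem_support, ha, Set.mem_singleton_iff]
    rw [Fintype.sum_eq_single a hzero, Fintype.sum_eq_single a fun i hi => by simp [hzero i hi]]

lemma sq_sum_sub_le_two_mul {p q : ι → ℝ} (hp : (Function.support p).Subsingleton)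
    (hq : (Function.support q).Subsingleton) :
    (∑ i, (p i - q i)) ^ 2 ≤ 2 * ∑ i, (p i - q i) ^ 2 := by
  classical
  let s : Finset ι := {i | p i ≠ 0}
  let t : Finset ι := {i | q i ≠ 0}
  have hs : #s ≤ 1 := card_le_one.2 fun i hi j hj => hp (by simpa [s] using hi)
    (by simpa [s] using hj)
  have ht : #t ≤ 1 := card_le_one.2 fun i hi j hj => hq (by simpa [t] using hi)
    (by simpa [t] using hj)
  have hcard : (#(s ∪ t) : ℝ) ≤ 2 := by
    exact_mod_cast (card_union_le s t).trans (Nat.add_le_add hs ht)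
  have houtside : ∀ i ∈ univ, i ∉ s ∪ t → p i - q i = 0 := by
    intro i _ hi
    obtain ⟨hpi, hqi⟩ : p i = 0 ∧ q i = 0 := by simpa [s, t] using hi
    rw [hpi, hqi, sub_self]
  rw [← sum_subset (subset_univ (s ∪ t)) houtside,
    ← sum_subset (subset_univ (s ∪ t)) fun i hi hi' => by
      rw [houtside i hi hi', sq, zero_mul]]
  exact sq_sum_le_card_mul_sum_sq.trans <|
    mul_le_mul_of_nonneg_right hcard (sum_nonneg fun _ _ => sq_nonneg _)

lemma degNormSq_sum_of_disjoint_support {f : ι → V → ℝ}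
    (hf : Pairwise fun i j => Disjoint (Function.support (f i)) (Function.support (f j))) :
    degNormSq w (∑ i, f i) = ∑ i, degNormSq w (f i) := by
  simp only [degNormSq_real, Finset.sum_apply,
    sq_sum_eq_of_subsingleton_support (subsingleton_support_apply hf _), mul_sum]
  exact sum_comm

lemma energy_sum_le_of_disjoint_support (hnonneg : ∀ u v, 0 ≤ w u v) {f : ι → V → ℝ}
    (hf : Pairwise fun i j => Disjoint (Function.support (f i)) (Function.support (f j))) :
    energy w (∑ i, f i) ≤ 2 * ∑ i, energy w (f i) := by
  have hpoint (u v : V) : w u v * ((∑ i, f i) u - (∑ i, f i) v) ^ 2 ≤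
      2 * ∑ i, w u v * (f i u - f i v) ^ 2 := by
    rw [Finset.sum_apply, Finset.sum_apply, ← sum_sub_distrib, ← mul_sum,
      mul_left_comm]
    exact mul_le_mul_of_nonneg_left (sq_sum_sub_le_two_mul (subsingleton_support_apply hf u)
      (subsingleton_support_apply hf v)) (hnonneg u v)
  have hswap : ∑ u, ∑ v, 2 * ∑ i, w u v * (f i u - f i v) ^ 2 =
      2 * ∑ i, ∑ u, ∑ v, w u v * (f i u - f i v) ^ 2 := by
    simp only [mul_sum]
    exact (sum_congr rfl fun u _ => sum_comm).trans sum_comm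
  rw [sum_congr rfl fun i _ => energy_real w (f i), ← mul_sum, energy_real]
  linarith [sum_le_sum fun u (_ : u ∈ univ) => sum_le_sum fun v (_ : v ∈ univ) =>
    hpoint u v]

end DisjointSupport

section MinMax

variable {V : Type*} [Fintype V] [DecidableEq V] {w : V → V → ℝ}

/-- A space of dimension `k + 1` contains a nonzero vector orthogonal to the first `k`
eigenfunctions. -/
lemma exists_lam_mul_degNormSq_le_energy (hsymm : ∀ u v, w u v = w v u)
    (hdeg : ∀ v, 0 < deg w v) {k : ℕ} (hk : k + 1 ≤ Fintype.card V)
    (T : (Fin (k + 1) → ℝ) →ₗ[ℝ] V → ℝ) :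
    ∃ c ≠ 0, lam w (k + 1) * degNormSq w (T c) ≤ energy w (T c) := by
  obtain ⟨x, hx⟩ := exists_isEigenbasis hsymm hdeg
  let coords : (Fin (k + 1) → ℝ) →ₗ[ℝ] Fin k → ℝ :=
    (Matrix.of fun i v => deg w v * x (Fin.castLE (by omega) i) v).mulVecLin ∘ₗ T
  have hcoords (c i) : coords c i = degInner w (T c) (x (Fin.castLE (by omega) i)) :=
    sum_congr rfl fun v _ => by simp only [Matrix.of_apply]; ring
  obtain ⟨c, hc, hc0⟩ :=
    (Submodule.ne_bot_iff _).1 (LinearMap.ker_ne_bot_of_finrank_lt (f := coords) (by simp))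
  refine ⟨c, hc0, ?_⟩
  rw [hx.degNormSq_eq, hx.energy_eq, mul_sum]
  refine sum_le_sum fun i _ => ?_
  rcases lt_or_ge (i : ℕ) k with hi | hi
  · have hzero : degInner w (T c) (x i) = 0 :=
      (hcoords c ⟨i, hi⟩).symm.trans (congrFun (LinearMap.mem_ker.1 hc) _)
    simp [hzero]
  · exact mul_le_mul_of_nonneg_right
      (lam_le_lam hsymm (by omega) (by omega) (by omega)) (sq_nonneg _)

lemma lam_le_two_mul_of_disjoint_support (hsymm : ∀ u v, w u v = w v u)
    (hnonneg : ∀ u v, 0 ≤ w u v) (hdeg : ∀ v, 0 < deg w v) {k : ℕ}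
    (hk : k + 1 ≤ Fintype.card V) {f : Fin (k + 1) → V → ℝ}
    (hf : Pairwise fun i j => Disjoint (Function.support (f i)) (Function.support (f j)))
    (hpos : ∀ i, 0 < degNormSq w (f i)) {R : ℝ}
    (henergy : ∀ i, energy w (f i) ≤ R * degNormSq w (f i)) : lam w (k + 1) ≤ 2 * R := by
  obtain ⟨c, hc0, hc⟩ := exists_lam_mul_degNormSq_le_energy hsymm hdeg hk
    (Fintype.linearCombination ℝ f)
  rw [Fintype.linearCombination_apply] at hc
  have hcf : Pairwise fun i j =>
      Disjoint (Function.support (c i • f i)) (Function.support (c j • f j)) :=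
    hf.mono fun i j h => h.mono (Function.support_const_smul_subset _ _)
      (Function.support_const_smul_subset _ _)
  have hnorm := degNormSq_sum_of_disjoint_support (w := w) hcf
  have hN : 0 < degNormSq w (∑ i, c i • f i) := by
    obtain ⟨a, ha⟩ := Function.ne_iff.1 hc0
    rw [hnorm]
    simp only [degNormSq_smul]
    exact sum_pos' (fun i _ => mul_nonneg (sq_nonneg _) (hpos i).le)
      ⟨a, mem_univ a, mul_pos (sq_pos_of_ne_zero ha) (hpos a)⟩
  refine le_of_mul_le_mul_right (hc.trans ?_) hN
  calc energy w (∑ i, c i • f i) ≤ 2 * ∑ i, energy w (c i • f i) :=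
        energy_sum_le_of_disjoint_support hnonneg hcf
    _ ≤ 2 * ∑ i, R * degNormSq w (c i • f i) := by
        simp only [energy_smul, degNormSq_smul, mul_left_comm R]
        gcongr with i
        exact henergy i
    _ = 2 * R * degNormSq w (∑ i, c i • f i) := by rw [hnorm, ← mul_sum, mul_assoc]

end MinMax

section Indicator

variable {V : Type*} [Fintype V] {w : V → V → ℝ}

lemma sum_mul_indicator_one (A : Finset V) (g : V → ℝ) :
    ∑ v, g v * Set.indicator A 1 v = ∑ v ∈ A, g v := by
  classical
  simp [Set.indicator_apply]

lemma degNormSq_indicator (A : Finset V) :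
    degNormSq w (Set.indicator (A : Set V) (1 : V → ℝ)) = vol w A := by
  rw [degNormSq_real, vol, ← sum_mul_indicator_one A]
  refine sum_congr rfl fun v _ => ?_
  by_cases hv : v ∈ A <;> simp [hv]

variable [DecidableEq V]

lemma energy_indicator (hsymm : ∀ u v, w u v = w v u) (A : Finset V) :
    energy w (Set.indicator (A : Set V) (1 : V → ℝ)) = pairWeight w A Aᶜ := by
  have hinner : ∑ u, ∑ v, w u v * (Set.indicator (A : Set V) (1 : V → ℝ) u *
      Set.indicator (A : Set V) (1 : V → ℝ) v) = pairWeight w A A := by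
    simp only [mul_left_comm (w _ _), ← mul_sum, sum_mul_indicator_one]
    simp only [mul_comm (Set.indicator _ _ _), sum_mul_indicator_one]
    rfl
  have hvol : vol w A = pairWeight w A A + pairWeight w A Aᶜ := by
    rw [← pairWeight_union_right A disjoint_compl_right, union_compl]
    rfl
  rw [energy_eq_degNormSq_sub hsymm, degNormSq_indicator, hinner, hvol, add_sub_cancel_left]

lemma HasSparseFamily.lam_le (hsymm : ∀ u v, w u v = w v u) (hnonneg : ∀ u v, 0 ≤ w u v)
    (hdeg : ∀ v, 0 < deg w v) {k : ℕ} (hk : 1 ≤ k) (hcard : k ≤ Fintype.card V) {r : ℝ}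
    (h : HasSparseFamily w k r) : lam w k ≤ 2 * r := by
  obtain ⟨k, rfl⟩ := Nat.exists_eq_add_of_le' hk
  obtain ⟨A, hA⟩ := h
  refine lam_le_two_mul_of_disjoint_support hsymm hnonneg hdeg hcard
    (f := fun i => Set.indicator (A i : Set V) 1) (fun i j hij => ?_) (fun i => ?_) fun i => ?_
  · exact (disjoint_coe.2 (hA.disjoint hij)).mono Set.support_indicator_subset
      Set.support_indicator_subset
  · rw [degNormSq_indicator]
    exact vol_pos hdeg (hA.nonempty i)
  · rw [degNormSq_indicator, energy_indicator hsymm]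
    exact hA.sparse i

end Indicator

/-! ### Cheeger rounding -/

section Cheeger

variable {V : Type*} {w : V → V → ℝ}

lemma abs_sub_add_indicator {A : Set V} {p : V → ℝ} (hp : ∀ v, 0 ≤ p v) (hpA : ∀ v ∉ A, p v = 0)
    {a : ℝ} (ha : 0 ≤ a) (u v : V) :
    |(p + a • A.indicator (1 : V → ℝ)) u - (p + a • A.indicator (1 : V → ℝ)) v| =
      |p u - p v| + a * (A.indicator (1 : V → ℝ) u - A.indicator (1 : V → ℝ) v) ^ 2 := by
  classical
  by_cases hu : u ∈ A <;> by_cases hv : v ∈ A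
  · simp [hu, hv]
  · simp [hu, hv, hpA v hv, abs_of_nonneg (hp u), abs_of_nonneg (add_nonneg (hp u) ha)]
  · simp only [Pi.add_apply, Pi.smul_apply, hu, hv, hpA u hu, Set.indicator_of_mem,
      Set.indicator_of_notMem, not_false_eq_true, Pi.one_apply, smul_eq_mul, mul_zero, mul_one,
      add_zero, zero_sub, abs_neg, abs_of_nonneg (hp v), abs_of_nonneg (add_nonneg (hp v) ha),
      neg_sq, one_pow]
  · simp [hu, hv, hpA u hu, hpA v hv]

variable [Fintype V]

lemma sq_sum_abs_sq_sub_sq_le (hsymm : ∀ u v, w u v = w v u) (hnonneg : ∀ u v, 0 ≤ w u v)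
    (f : V → ℝ) :
    (1 / 2 * ∑ u, ∑ v, w u v * |f u ^ 2 - f v ^ 2|) ^ 2 ≤ 2 * (energy w f * degNormSq w f) := by
  have hCS : (∑ u, ∑ v, w u v * |f u ^ 2 - f v ^ 2|) ^ 2 ≤
      (∑ u, ∑ v, w u v * (f u - f v) ^ 2) * ∑ u, ∑ v, w u v * (f u + f v) ^ 2 := by
    simp only [← sum_product', univ_product_univ]
    refine sum_sq_le_sum_mul_sum_of_sq_le_mul _ (fun p _ => ?_) (fun p _ => ?_) fun p _ => ?_
    · exact mul_nonneg (hnonneg _ _) (sq_nonneg _)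
    · exact mul_nonneg (hnonneg _ _) (sq_nonneg _)
    · rw [mul_pow, sq_abs]
      exact le_of_eq (by ring)
  have hplus : ∑ u, ∑ v, w u v * (f u + f v) ^ 2 ≤ 4 * degNormSq w f := by
    calc ∑ u, ∑ v, w u v * (f u + f v) ^ 2
        ≤ ∑ u, ∑ v, w u v * (2 * f u ^ 2 + 2 * f v ^ 2) := by
          gcongr with u _ v _
          · exact hnonneg u v
          · linarith [add_sq_le (a := f u) (b := f v)]
      _ = 4 * degNormSq w f := by
          rw [sum_sum_mul_add hsymm fun v => 2 * f v ^ 2, degNormSq_real]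
          simp only [mul_left_comm _ (2 : ℝ), ← mul_sum]
          ring
  have hminus : 0 ≤ ∑ u, ∑ v, w u v * (f u - f v) ^ 2 :=
    sum_nonneg fun u _ => sum_nonneg fun v _ =>
      mul_nonneg (hnonneg u v) (sq_nonneg _)
  rw [energy_real]
  linarith [mul_le_mul_of_nonneg_left hplus hminus]

variable [DecidableEq V]

lemma sum_abs_sub_add_indicator (hsymm : ∀ u v, w u v = w v u) {A : Finset V} {p : V → ℝ}
    (hp : ∀ v, 0 ≤ p v) (hpA : ∀ v ∉ A, p v = 0) {a : ℝ} (ha : 0 ≤ a) :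
    1 / 2 * ∑ u, ∑ v, w u v * |(p + a • Set.indicator (A : Set V) (1 : V → ℝ)) u -
        (p + a • Set.indicator (A : Set V) (1 : V → ℝ)) v| =
      1 / 2 * ∑ u, ∑ v, w u v * |p u - p v| + a * pairWeight w A Aᶜ := by
  simp only [abs_sub_add_indicator hp (A := A) hpA ha, mul_add, sum_add_distrib,
    mul_left_comm _ a, ← mul_sum]
  rw [← energy_indicator hsymm, energy_real]

/-- Peel off the smallest nonzero value of `q` times the indicator of its support. -/
lemma mul_sum_deg_le_sum_abs_sub (hsymm : ∀ u v, w u v = w v u) {β : ℝ} {q : V → ℝ}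
    (hq : ∀ v, 0 ≤ q v) (hβ : ∀ S : Finset V, S.Nonempty → (∀ v ∈ S, q v ≠ 0) →
      β * vol w S ≤ pairWeight w S Sᶜ) :
    β * ∑ v, deg w v * q v ≤ 1 / 2 * ∑ u, ∑ v, w u v * |q u - q v| := by
  induction hn : #{v | q v ≠ 0} using Nat.strong_induction_on generalizing q with
  | _ n ih =>
  subst hn
  set S : Finset V := {v | q v ≠ 0} with hS
  have hmem {v} : v ∈ S ↔ q v ≠ 0 := by simp [hS]
  rcases S.eq_empty_or_nonempty with hempty | hne
  · have hzero (v) : q v = 0 := by simpa [hempty] using (hmem (v := v)).not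
    simp [hzero]
  obtain ⟨b, hbS, hmin⟩ := exists_min_image S q hne
  set p : V → ℝ := q - q b • Set.indicator (S : Set V) (1 : V → ℝ) with hpdef
  have hqp : q = p + q b • Set.indicator (S : Set V) (1 : V → ℝ) := by rw [hpdef, sub_add_cancel]
  have hpS (v) (hv : v ∉ S) : p v = 0 := by simpa [hpdef, hv] using hmem.not.1 hv
  have hp (v) : 0 ≤ p v := by
    by_cases hv : v ∈ S
    · simpa [hpdef, hv] using hmin v hv
    · exact (hpS v hv).ge
  have hsub {v} (hv : p v ≠ 0) : v ∈ S := not_imp_comm.1 (hpS v) hv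
  have hcard : #{v | p v ≠ 0} < #S := by
    refine card_lt_card (Finset.ssubset_iff_subset_ne.2 ⟨fun v hv => ?_, fun h => ?_⟩)
    · exact hsub (by simpa using hv)
    · exact absurd (h ▸ hbS) (by simp [hpdef, hbS])
  have hind := ih _ hcard hp (fun T hT hTp => hβ T hT fun v hv => hmem.1 (hsub (hTp v hv))) rfl
  have hmass : ∑ v, deg w v * q v = ∑ v, deg w v * p v + q b * vol w S := by
    rw [vol, ← sum_mul_indicator_one S, mul_sum, ← sum_add_distrib]
    refine sum_congr rfl fun v _ => ?_
    simp only [hpdef, Pi.sub_apply, Pi.smul_apply, smul_eq_mul]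
    ring
  have hsplit := sum_abs_sub_add_indicator hsymm hp hpS (hq b)
  rw [← hqp] at hsplit
  rw [hmass, hsplit]
  linarith [mul_le_mul_of_nonneg_left (hβ S hne fun v hv => hmem.1 hv) (hq b)]

/-- The set `S` of least conductance inside the support of `f` satisfies the claim: apply the coarea
inequality to `f²`. -/
lemma exists_subset_support_cut_le (hsymm : ∀ u v, w u v = w v u) (hnonneg : ∀ u v, 0 ≤ w u v)
    (hdeg : ∀ v, 0 < deg w v) {f : V → ℝ} {R : ℝ} (hpos : 0 < degNormSq w f)
    (henergy : energy w f ≤ R * degNormSq w f) :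
    ∃ S : Finset V, S.Nonempty ∧ (∀ v ∈ S, f v ≠ 0) ∧
      pairWeight w S Sᶜ ≤ √(2 * R) * vol w S := by
  have hne : {S : Finset V | S.Nonempty ∧ ∀ v ∈ S, f v ≠ 0}.Nonempty := by
    by_contra! h
    refine hpos.ne' ?_
    rw [degNormSq_real]
    refine sum_eq_zero fun v _ => ?_
    have hv : f v = 0 := by
      by_contra hv
      exact Set.eq_empty_iff_forall_notMem.1 h {v} ⟨singleton_nonempty v, by simpa using hv⟩
    simp [hv]
  obtain ⟨S, ⟨hS, hSf⟩, hmin⟩ := Set.exists_min_image _ (phi w) (Set.toFinite _) hne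
  have hbelow (T : Finset V) (hT : T.Nonempty) (hTf : ∀ v ∈ T, f v ^ 2 ≠ 0) :
      phi w S * vol w T ≤ pairWeight w T Tᶜ := by
    rw [← le_div_iff₀ (vol_pos hdeg hT), ← eW_univ_eq_pairWeight_compl]
    exact hmin T ⟨hT, fun v hv => by simpa using hTf v hv⟩
  have hcoarea := mul_sum_deg_le_sum_abs_sub hsymm (fun v => sq_nonneg (f v)) hbelow
  have hphi : 0 ≤ phi w S := div_nonneg (pairWeight_nonneg hnonneg _ _) (vol_pos hdeg hS).le
  have hsq : phi w S ^ 2 * degNormSq w f ^ 2 ≤ 2 * R * degNormSq w f ^ 2 := by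
    calc phi w S ^ 2 * degNormSq w f ^ 2
        ≤ (1 / 2 * ∑ u, ∑ v, w u v * |f u ^ 2 - f v ^ 2|) ^ 2 := by
          rw [← mul_pow, degNormSq_real] at *
          exact pow_le_pow_left₀ (mul_nonneg hphi hpos.le) hcoarea 2
      _ ≤ 2 * (energy w f * degNormSq w f) := sq_sum_abs_sq_sub_sq_le hsymm hnonneg f
      _ ≤ 2 * (R * degNormSq w f * degNormSq w f) := by gcongr
      _ = 2 * R * degNormSq w f ^ 2 := by ring
  refine ⟨S, hS, hSf, ?_⟩
  rw [← div_le_iff₀ (vol_pos hdeg hS), ← eW_univ_eq_pairWeight_compl]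
  exact Real.le_sqrt_of_sq_le (le_of_mul_le_mul_right hsq (by positivity))

end Cheeger

/-! ### Well-separated clusters of an isotropic configuration -/

section Packing

variable {ι : Type*} {a : ι → ℝ} {B θ : ℝ}

lemma exists_subset_sum_mem_Icc (hθ : 0 < θ) (hB : 2 * θ ≤ B) {s : Finset ι}
    (ha : ∀ c ∈ s, a c ≤ B) (hs : θ ≤ ∑ c ∈ s, a c) :
    ∃ t ⊆ s, ∑ c ∈ t, a c ∈ Set.Icc θ B := by
  classical
  induction s using Finset.induction_on with
  | empty => exact absurd hs (by simpa using hθ)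
  | insert c s hc ih =>
    by_cases hsθ : θ ≤ ∑ i ∈ s, a i
    · obtain ⟨t, hts, ht⟩ := ih (fun i hi => ha i (mem_insert_of_mem hi)) hsθ
      exact ⟨t, hts.trans (subset_insert c s), ht⟩
    by_cases hcθ : θ ≤ a c
    · exact ⟨{c}, by simp, by simpa using ⟨hcθ, ha c (mem_insert_self c s)⟩⟩
    · refine ⟨insert c s, subset_rfl, hs, ?_⟩
      rw [sum_insert hc]
      linarith

lemma exists_disjoint_subsets_le_sum (hθ : 0 < θ) (hB : 2 * θ ≤ B) {m : ℕ} {s : Finset ι}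
    (ha : ∀ c ∈ s, a c ≤ B) (hs : m * B - B + θ ≤ ∑ c ∈ s, a c) :
    ∃ t : Fin m → Finset ι, (∀ i, t i ⊆ s ∧ θ ≤ ∑ c ∈ t i, a c) ∧
      Pairwise fun i j => Disjoint (t i) (t j) := by
  classical
  induction m generalizing s with
  | zero => exact ⟨Fin.elim0, fun i => i.elim0, fun i => i.elim0⟩
  | succ m ih =>
    push_cast at hs
    have hmB : 0 ≤ (m : ℝ) * B := mul_nonneg m.cast_nonneg (by linarith)
    obtain ⟨t₀, ht₀, hlower, hupper⟩ := exists_subset_sum_mem_Icc hθ hB ha (by linarith)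
    obtain ⟨t, ht, hdisj⟩ := ih (s := s \ t₀) (fun c hc => ha c (sdiff_subset hc))
      (by linarith [sum_sdiff (f := a) ht₀])
    have hdisj₀ (i) : Disjoint t₀ (t i) := disjoint_of_subset_right (ht i).1 disjoint_sdiff
    refine ⟨Fin.cons t₀ t, Fin.forall_fin_succ.2 ⟨⟨ht₀, hlower⟩, fun i =>
      ⟨(ht i).1.trans sdiff_subset, (ht i).2⟩⟩, ?_⟩
    exact pairwise_fin_succ_iff.2 ⟨fun i => (hdisj₀ i).symm, hdisj₀, hdisj⟩

lemma exists_fiber_unions_le_sum {V κ : Type*} (hθ : 0 < θ) (hB : 2 * θ ≤ B) [DecidableEq κ]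
    (cell : V → κ) {P : Finset V} {μ : V → ℝ} (hcell : ∀ c, ∑ v ∈ P with cell v = c, μ v ≤ B)
    {m : ℕ} (hP : m * B - B + θ ≤ ∑ v ∈ P, μ v) :
    ∃ K : Fin m → Finset V, (∀ i, K i ⊆ P ∧ θ ≤ ∑ v ∈ K i, μ v) ∧
      ∀ i j, i ≠ j → ∀ u ∈ K i, ∀ v ∈ K j, cell u ≠ cell v := by
  have hfiber (t : Finset κ) :
      ∑ c ∈ t, ∑ v ∈ P with cell v = c, μ v = ∑ v ∈ P with cell v ∈ t, μ v :=
    sum_fiberwise_eq_sum_filter P t cell μ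
  obtain ⟨t, ht, hdisj⟩ := exists_disjoint_subsets_le_sum hθ hB (s := P.image cell)
    (fun c _ => hcell c)
    (by rwa [hfiber, filter_true_of_mem fun v hv => mem_image_of_mem cell hv])
  refine ⟨fun i => {v ∈ P | cell v ∈ t i},
    fun i => ⟨filter_subset _ P, hfiber (t i) ▸ (ht i).2⟩, fun i j hij u hu v hv h => ?_⟩
  exact disjoint_left.1 (hdisj hij) (mem_filter.1 hu).2 (h ▸ (mem_filter.1 hv).2)

end Packing

section Grid

lemma norm_coe_add_norm_coe_le_of_floor_ne {x y : ℝ} (h : ⌊x⌋ ≠ ⌊y⌋) :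
    ‖(x : UnitAddCircle)‖ + ‖(y : UnitAddCircle)‖ ≤ |x - y| := by
  wlog hlt : ⌊x⌋ < ⌊y⌋ generalizing x y
  · rw [add_comm, abs_sub_comm]
    exact this h.symm (lt_of_le_of_ne (not_lt.1 hlt) h.symm)
  have hx : x < ⌊y⌋ := Int.floor_lt.1 hlt
  have hy : (⌊y⌋ : ℝ) ≤ y := Int.floor_le y
  rw [UnitAddCircle.norm_eq, UnitAddCircle.norm_eq]
  calc |x - round x| + |y - round y| ≤ |x - ⌊y⌋| + |y - ⌊y⌋| :=
        add_le_add (round_le x ⌊y⌋) (round_le y ⌊y⌋)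
    _ = |x - y| := by
        rw [abs_of_neg (by linarith), abs_of_nonneg (by linarith), abs_of_neg (by linarith)]
        ring

lemma card_norm_sub_div_lt_le_one {N : ℕ} (hN : N ≠ 0) (x : ℝ) :
    #{i : Fin N | ‖((x - (i : ℕ) / N : ℝ) : UnitAddCircle)‖ < 1 / (2 * N)} ≤ 1 := by
  have hN' : (0 : ℝ) < N := by exact_mod_cast hN.bot_lt
  refine card_le_one.2 fun i hi j hj => ?_
  simp only [mem_filter_univ, UnitAddCircle.norm_eq] at hi hj
  set p := round (x - (i : ℕ) / N)
  set q := round (x - (j : ℕ) / N)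
  have hlt : |(x - (i : ℕ) / N - p) - (x - (j : ℕ) / N - q)| < 1 / N := by
    refine (abs_sub _ _).trans_lt ?_
    have : (1 : ℝ) / N = 1 / (2 * N) + 1 / (2 * N) := by field_simp; norm_num
    linarith
  have hint : (x - (i : ℕ) / N - p) - (x - (j : ℕ) / N - q) =
      ((j : ℕ) - (i : ℕ) + N * (q - p) : ℤ) / (N : ℝ) := by
    push_cast
    field_simp
    ring
  rw [hint, abs_div, abs_of_pos hN', div_lt_div_iff_of_pos_right hN'] at hlt
  have hzero : ((j : ℕ) - (i : ℕ) + N * (q - p) : ℤ) = 0 :=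
    Int.abs_lt_one_iff.1 (by exact_mod_cast hlt)
  have hmod : ((i : ℕ) : ℤ) ≡ (j : ℕ) [ZMOD N] := Int.modEq_iff_dvd.2 ⟨p - q, by linarith⟩
  exact Fin.ext ((Int.natCast_modEq_iff.1 hmod).eq_of_lt_of_lt i.isLt j.isLt)

variable {V : Type*} [Fintype V]

/-- Average over the shifts `i / N` with `i < N`: every point is close to the lattice for at most
one of them. -/
lemma exists_shift_sum_norm_sub_lt_le {N : ℕ} (hN : N ≠ 0) (y : V → ℝ) {μ : V → ℝ}
    (hμ : ∀ v, 0 ≤ μ v) :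
    ∃ t : ℝ, ∑ v with ‖((y v - t : ℝ) : UnitAddCircle)‖ < 1 / (2 * N), μ v ≤ (∑ v, μ v) / N := by
  have hsum : ∑ i : Fin N, ∑ v with ‖((y v - (i : ℕ) / N : ℝ) : UnitAddCircle)‖ < 1 / (2 * N),
      μ v ≤ ∑ _i : Fin N, (∑ v, μ v) / N := by
    rw [Fin.sum_const, nsmul_eq_mul, mul_div_cancel₀ _ (by exact_mod_cast hN)]
    simp only [sum_filter]
    rw [sum_comm]
    refine sum_le_sum fun v _ => ?_
    rw [← sum_filter, sum_const, nsmul_eq_mul]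
    exact mul_le_of_le_one_left (hμ v)
      (by exact_mod_cast card_norm_sub_div_lt_le_one hN (y v))
  have : Nonempty (Fin N) := Fin.pos_iff_nonempty.1 hN.bot_lt
  obtain ⟨i, -, hi⟩ := exists_le_of_sum_le univ_nonempty hsum
  exact ⟨_, hi⟩

lemma exists_padded_grid {ι : Type*} [Fintype ι] {N : ℕ} (hN : N ≠ 0) (x : V → ι → ℝ) {μ : V → ℝ}
    (hμ : ∀ v, 0 ≤ μ v) :
    ∃ (cell : V → ι → ℤ) (P : Finset V),
      (∀ u v, cell u = cell v → ∀ j, |x u j - x v j| ≤ 1) ∧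
      (∀ u ∈ P, ∀ v ∈ P, cell u ≠ cell v → ∃ j, 1 / N ≤ |x u j - x v j|) ∧
      (1 - Fintype.card ι / N) * ∑ v, μ v ≤ ∑ v ∈ P, μ v := by
  classical
  choose t ht using fun j => exists_shift_sum_norm_sub_lt_le hN (fun v => x v j) hμ
  let bad (j : ι) : Finset V := {v | ‖((x v j - t j : ℝ) : UnitAddCircle)‖ < 1 / (2 * N)}
  have hmem {v} (hv : v ∈ (univ.sup bad)ᶜ) (j) :
      1 / (2 * N) ≤ ‖((x v j - t j : ℝ) : UnitAddCircle)‖ := by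
    simpa [bad] using fun h => mem_compl.1 hv (mem_sup.2 ⟨j, mem_univ j, h⟩)
  refine ⟨fun v j => ⌊x v j - t j⌋, (univ.sup bad)ᶜ, fun u v h j => ?_,
    fun u hu v hv h => ?_, ?_⟩
  · have := Int.abs_sub_lt_one_of_floor_eq_floor (congrFun h j)
    rw [sub_sub_sub_cancel_right] at this
    exact this.le
  · obtain ⟨j, hj⟩ := Function.ne_iff.1 h
    refine ⟨j, ?_⟩
    have hhalf : (1 : ℝ) / N = 1 / (2 * N) + 1 / (2 * N) := by ring
    have := norm_coe_add_norm_coe_le_of_floor_ne hj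
    rw [sub_sub_sub_cancel_right] at this
    linarith [hmem hu j, hmem hv j]
  · have hunion {s t : Finset V} : ∑ v ∈ s ∪ t, μ v ≤ ∑ v ∈ s, μ v + ∑ v ∈ t, μ v :=
      sum_union_inter (f := μ) ▸ le_add_of_nonneg_right (sum_nonneg fun v _ => hμ v)
    have hbad : ∑ v ∈ univ.sup bad, μ v ≤ Fintype.card ι / N * ∑ v, μ v :=
      calc ∑ v ∈ univ.sup bad, μ v ≤ ∑ j, ∑ v ∈ bad j, μ v :=
            apply_sup_le_sum (f := fun s => ∑ v ∈ s, μ v) sum_empty hunion univ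
        _ ≤ ∑ _j : ι, (∑ v, μ v) / N := sum_le_sum fun j _ => ht j
        _ = Fintype.card ι / N * ∑ v, μ v := by
            rw [sum_const, card_univ, nsmul_eq_mul, div_mul_eq_mul_div, mul_div_assoc]
    linarith [sum_add_sum_compl (univ.sup bad) μ]

end Grid

section Isotropic

open NormedSpace

lemma norm_mul_norm_normalize_sub_le {E : Type*} [NormedAddCommGroup E] [NormedSpace ℝ E]
    (x y : E) : ‖y‖ * ‖normalize x - normalize y‖ ≤ 2 * ‖x - y‖ := by
  have hsplit : ‖y‖ • (normalize x - normalize y) = (‖y‖ - ‖x‖) • normalize x + (x - y) := by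
    rw [smul_sub, norm_smul_normalize, sub_smul, norm_smul_normalize]
    abel
  have hle_one : ‖normalize x‖ ≤ 1 := by
    rcases eq_or_ne x 0 with rfl | hx
    · simp
    · exact (norm_normalize hx).le
  calc ‖y‖ * ‖normalize x - normalize y‖ = ‖(‖y‖ - ‖x‖) • normalize x + (x - y)‖ := by
        rw [← hsplit, norm_smul, norm_norm]
    _ ≤ |‖y‖ - ‖x‖| * ‖normalize x‖ + ‖x - y‖ := by
        simpa only [norm_smul, Real.norm_eq_abs] using
          norm_add_le ((‖y‖ - ‖x‖) • normalize x) (x - y)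
    _ ≤ ‖x - y‖ * 1 + ‖x - y‖ := by
        gcongr
        rw [abs_sub_comm]
        exact abs_norm_sub_norm_le x y
    _ = 2 * ‖x - y‖ := by ring

variable {V E : Type*} [Fintype V] [NormedAddCommGroup E] [InnerProductSpace ℝ E]

/-- The weighted configuration `(d v, F v)` is in isotropic position: its second moment in every
direction is the identity. -/
def IsIsotropic (d : V → ℝ) (F : V → E) : Prop :=
  ∀ y, ∑ v, d v * inner ℝ y (F v) ^ 2 = ‖y‖ ^ 2

variable {d : V → ℝ} {F : V → E}

lemma IsIsotropic.sum_mul_norm_sq [FiniteDimensional ℝ E] (hF : IsIsotropic d F) :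
    ∑ v, d v * ‖F v‖ ^ 2 = Module.finrank ℝ E := by
  let b := stdOrthonormalBasis ℝ E
  calc ∑ v, d v * ‖F v‖ ^ 2 = ∑ v, ∑ i, d v * inner ℝ (b i) (F v) ^ 2 := by
        simp only [← b.sum_sq_inner_right, mul_sum]
    _ = ∑ i, ‖b i‖ ^ 2 := by rw [sum_comm, sum_congr rfl fun i _ => hF (b i)]
    _ = Module.finrank ℝ E := by simp

lemma norm_sq_mul_one_sub_le_inner_normalize_sq {x y : E} {ε : ℝ} (hx : x ≠ 0)
    (h : ‖normalize x - normalize y‖ ^ 2 ≤ ε) :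
    ‖y‖ ^ 2 * (1 - ε) ≤ inner ℝ (normalize x) y ^ 2 := by
  rcases eq_or_ne y 0 with rfl | hy
  · simp
  have hinner : inner ℝ (normalize x) y = ‖y‖ * inner ℝ (normalize x) (normalize y) := by
    rw [← real_inner_smul_right, norm_smul_normalize]
  rw [norm_sub_sq_real, norm_normalize hx, norm_normalize hy] at h
  rw [hinner, mul_pow]
  gcongr
  linarith [sq_nonneg (inner ℝ (normalize x) (normalize y) - 1)]

/-- Test isotropy in the direction of one point of the cluster. -/
lemma IsIsotropic.sum_mul_norm_sq_mul_le_one (hF : IsIsotropic d F) (hd : ∀ v, 0 ≤ d v) {ε : ℝ}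
    {s : Finset V} (hs : ∀ u ∈ s, ∀ v ∈ s, ‖normalize (F u) - normalize (F v)‖ ^ 2 ≤ ε) :
    (∑ v ∈ s, d v * ‖F v‖ ^ 2) * (1 - ε) ≤ 1 := by
  by_cases h : ∃ u ∈ s, F u ≠ 0
  · obtain ⟨u, hu, hu0⟩ := h
    calc (∑ v ∈ s, d v * ‖F v‖ ^ 2) * (1 - ε)
        ≤ ∑ v ∈ s, d v * inner ℝ (normalize (F u)) (F v) ^ 2 := by
          simp only [sum_mul, mul_assoc]
          gcongr with v hv
          · exact hd v
          · exact norm_sq_mul_one_sub_le_inner_normalize_sq hu0 (hs u hu v hv)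
      _ ≤ ∑ v, d v * inner ℝ (normalize (F u)) (F v) ^ 2 :=
          sum_le_univ_sum_of_nonneg fun v => mul_nonneg (hd v) (sq_nonneg _)
      _ = 1 := by rw [hF, norm_normalize hu0, one_pow]
  · push Not at h
    rw [sum_eq_zero fun v hv => by simp [h v hv], zero_mul]
    exact zero_le_one

lemma exists_padded_grid_euclideanSpace {m : ℕ} (hm : m ≠ 0) (F : V → EuclideanSpace ℝ (Fin m))
    {μ : V → ℝ} (hμ : ∀ v, 0 ≤ μ v) :
    ∃ (cell : V → Fin m → ℤ) (P : Finset V),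
      (∀ u v, cell u = cell v → ‖F u - F v‖ ^ 2 ≤ 1 / (4 * m)) ∧
      (∀ u ∈ P, ∀ v ∈ P, cell u ≠ cell v → 1 / (8 * (m : ℝ) ^ 3) ≤ ‖F u - F v‖) ∧
      (1 - 1 / (4 * m)) * ∑ v, μ v ≤ ∑ v ∈ P, μ v := by
  obtain ⟨cell, P, hsmall, hfar, hmass⟩ :=
    exists_padded_grid (N := 4 * m ^ 2) (by positivity) (fun v j => 2 * m * F v j) hμ
  have hscale (u v j) : |2 * m * F u j - 2 * m * F v j| = 2 * m * |(F u - F v) j| := by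
    rw [← mul_sub, abs_mul, abs_of_pos (by positivity), PiLp.sub_apply]
  simp only [hscale] at hsmall hfar
  refine ⟨cell, P, fun u v h => ?_, fun u hu v hv h => ?_, ?_⟩
  · have hcoord (j) : ‖(F u - F v) j‖ ≤ 1 / (2 * m) := by
      rw [le_div_iff₀' (by positivity)]
      exact hsmall u v h j
    calc ‖F u - F v‖ ^ 2 = ∑ j, ‖(F u - F v) j‖ ^ 2 := EuclideanSpace.norm_sq_eq _
      _ ≤ ∑ _j : Fin m, (1 / (2 * (m : ℝ))) ^ 2 := by gcongr with j; exact hcoord j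
      _ = 1 / (4 * m) := by
          rw [Fin.sum_const, nsmul_eq_mul]
          field_simp
          norm_num
  · obtain ⟨j, hj⟩ := hfar u hu v hv h
    have hle : |(F u - F v) j| ≤ ‖F u - F v‖ := PiLp.norm_apply_le (F u - F v) j
    calc 1 / (8 * (m : ℝ) ^ 3) = 1 / ((4 * m ^ 2 : ℕ) : ℝ) / (2 * m) := by
          push_cast
          field_simp
          norm_num
      _ ≤ |(F u - F v) j| := (div_le_iff₀' (by positivity)).2 hj
      _ ≤ ‖F u - F v‖ := hle
  · convert hmass using 3
    rw [Fintype.card_fin]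
    push_cast
    field_simp

/-- Grid cells have diameter so small that each carries mass barely above `1`, so that a total mass
`m` can be distributed greedily over `m` unions of cells. -/
lemma IsIsotropic.exists_separated_clusters {m : ℕ} (hm : m ≠ 0) (hd : ∀ v, 0 ≤ d v)
    {F : V → EuclideanSpace ℝ (Fin m)} (hF : IsIsotropic d F) :
    ∃ K : Fin m → Finset V, (∀ i, 1 / 2 ≤ ∑ v ∈ K i, d v * ‖F v‖ ^ 2) ∧
      ∀ i j, i ≠ j → ∀ u ∈ K i, ∀ v ∈ K j,
        1 / (8 * (m : ℝ) ^ 3) ≤ ‖normalize (F u) - normalize (F v)‖ := by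
  have hm1 : (1 : ℝ) ≤ m := by exact_mod_cast hm.bot_lt
  obtain ⟨cell, P, hsmall, hfar, hmass⟩ :=
    exists_padded_grid_euclideanSpace hm (fun v => normalize (F v))
      (μ := fun v => d v * ‖F v‖ ^ 2) (fun v => mul_nonneg (hd v) (sq_nonneg _))
  rw [hF.sum_mul_norm_sq, finrank_euclideanSpace_fin] at hmass
  have hε : (0 : ℝ) < 1 - 1 / (4 * m) := by
    rw [sub_pos, div_lt_one (by positivity)]
    linarith
  set B : ℝ := 1 / (1 - 1 / (4 * m)) with hB
  have hBone : 1 ≤ B := one_le_one_div hε (sub_le_self 1 (by positivity))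
  have hBmul : m * B = m + B / 4 := by
    have : B * (1 - 1 / (4 * m)) = 1 := one_div_mul_cancel hε.ne'
    field_simp at this ⊢
    linarith
  have hcell (c) : ∑ v ∈ P with cell v = c, d v * ‖F v‖ ^ 2 ≤ B := by
    rw [hB, le_div_iff₀ hε]
    refine hF.sum_mul_norm_sq_mul_le_one hd fun u hu v hv => hsmall u v ?_
    exact (mem_filter.1 hu).2.trans (mem_filter.1 hv).2.symm
  have hmass' : (1 - 1 / (4 * m)) * m = m - (1 / 4 : ℝ) := by
    field_simp
  obtain ⟨K, hK, hKcell⟩ := exists_fiber_unions_le_sum (θ := 1 / 2) (m := m) (by norm_num)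
    (by linarith) cell hcell (by linarith)
  refine ⟨K, fun i => (hK i).2, fun i j hij u hu v hv => ?_⟩
  exact hfar u ((hK i).1 hu) v ((hK j).1 hv) (hKcell i j hij u hu v hv)

end Isotropic

/-! ### Localized test functions -/

section ConicalBump

open NormedSpace

variable {E : Type*} [NormedAddCommGroup E] {L : ℝ} {s : Set E}

lemma abs_max_zero_infDist_sub_le (hL : 0 ≤ L) (x y : E) :
    |max 0 (1 - L * Metric.infDist x s) - max 0 (1 - L * Metric.infDist y s)| ≤ L * ‖x - y‖ := by
  calc |max 0 (1 - L * Metric.infDist x s) - max 0 (1 - L * Metric.infDist y s)|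
      ≤ |(1 - L * Metric.infDist x s) - (1 - L * Metric.infDist y s)| := by
        simpa using abs_max_sub_max_le_max 0 (1 - L * Metric.infDist x s) 0
          (1 - L * Metric.infDist y s)
    _ = L * |Metric.infDist x s - Metric.infDist y s| := by
        rw [sub_sub_sub_cancel_left, ← mul_sub, abs_mul, abs_of_nonneg hL, abs_sub_comm]
    _ ≤ L * ‖x - y‖ := by
        gcongr
        simpa [Real.dist_eq, dist_eq_norm] using
          (Metric.lipschitz_infDist_pt s).dist_le_mul x y

variable [NormedSpace ℝ E]

/-- The norm, cut off outside the cone of vectors whose direction is within `1 / L` of `s`. -/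
noncomputable def conicalBump (L : ℝ) (s : Set E) (x : E) : ℝ :=
  ‖x‖ * max 0 (1 - L * Metric.infDist (normalize x) s)

lemma conicalBump_of_normalize_mem {x : E} (hx : normalize x ∈ s) : conicalBump L s x = ‖x‖ := by
  simp [conicalBump, Metric.infDist_zero_of_mem hx]

lemma exists_dist_lt_of_conicalBump_ne_zero (hL : 0 < L) (hs : s.Nonempty) {x : E}
    (hx : conicalBump L s x ≠ 0) : ∃ y ∈ s, dist (normalize x) y < 1 / L := by
  have hpos : 0 < 1 - L * Metric.infDist (normalize x) s := by
    by_contra! h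
    exact hx (by rw [conicalBump, max_eq_left h, mul_zero])
  refine (Metric.infDist_lt_iff hs).1 ?_
  rw [lt_div_iff₀' hL]
  linarith

lemma disjoint_support_conicalBump (hL : 0 < L) {t : Set E} (hs : s.Nonempty) (ht : t.Nonempty)
    (h : ∀ y ∈ s, ∀ z ∈ t, 2 / L ≤ dist y z) :
    Disjoint (Function.support (conicalBump L s)) (Function.support (conicalBump L t)) := by
  refine Set.disjoint_left.2 fun x hxs hxt => ?_
  obtain ⟨y, hy, hxy⟩ := exists_dist_lt_of_conicalBump_ne_zero hL hs hxs
  obtain ⟨z, hz, hxz⟩ := exists_dist_lt_of_conicalBump_ne_zero hL ht hxt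
  have hsum : 2 / L = 1 / L + 1 / L := by ring
  linarith [h y hy z hz, dist_triangle_left y z (normalize x)]

lemma abs_conicalBump_sub_le (hL : 0 ≤ L) (x y : E) :
    |conicalBump L s x - conicalBump L s y| ≤ (1 + 2 * L) * ‖x - y‖ := by
  set p := max 0 (1 - L * Metric.infDist (normalize x) s)
  set q := max 0 (1 - L * Metric.infDist (normalize y) s)
  have hp0 : 0 ≤ p := le_max_left _ _
  have hp1 : p ≤ 1 :=
    max_le zero_le_one (sub_le_self 1 (mul_nonneg hL Metric.infDist_nonneg))
  calc |‖x‖ * p - ‖y‖ * q| = |(‖x‖ - ‖y‖) * p + ‖y‖ * (p - q)| := by ring_nf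
    _ ≤ |‖x‖ - ‖y‖| * p + ‖y‖ * |p - q| := by
        simpa only [abs_mul, abs_of_nonneg hp0, abs_norm] using
          abs_add_le ((‖x‖ - ‖y‖) * p) (‖y‖ * (p - q))
    _ ≤ ‖x - y‖ * 1 + ‖y‖ * (L * ‖normalize x - normalize y‖) := by
        gcongr
        · exact abs_norm_sub_norm_le x y
        · exact abs_max_zero_infDist_sub_le hL _ _
    _ = ‖x - y‖ + L * (‖y‖ * ‖normalize x - normalize y‖) := by ring
    _ ≤ ‖x - y‖ + L * (2 * ‖x - y‖) := by
        grw [norm_mul_norm_normalize_sub_le x y]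
    _ = (1 + 2 * L) * ‖x - y‖ := by ring

end ConicalBump

section SpectralEmbedding

variable {V : Type*} [Fintype V] {w : V → V → ℝ}

lemma energy_nonneg {E : Type*} [SeminormedAddCommGroup E] (hnonneg : ∀ u v, 0 ≤ w u v)
    (F : V → E) : 0 ≤ energy w F :=
  mul_nonneg (by norm_num) <| sum_nonneg fun u _ => sum_nonneg fun v _ =>
    mul_nonneg (hnonneg u v) (sq_nonneg _)

lemma energy_le_sq_mul_energy {E : Type*} [NormedAddCommGroup E] (hnonneg : ∀ u v, 0 ≤ w u v)
    {F : V → E} {g : V → ℝ} {C : ℝ} (h : ∀ u v, |g u - g v| ≤ C * ‖F u - F v‖) :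
    energy w g ≤ C ^ 2 * energy w F := by
  simp only [energy, Real.norm_eq_abs, mul_left_comm (C ^ 2), mul_sum, ← mul_pow]
  gcongr with u _ v _
  · exact hnonneg u v
  · exact h u v

lemma energy_euclideanSpace {ι : Type*} [Fintype ι] (F : V → EuclideanSpace ℝ ι) :
    energy w F = ∑ j, energy w fun v => F v j := by
  simp only [energy, EuclideanSpace.norm_sq_eq, PiLp.sub_apply, mul_sum]
  exact ((sum_congr rfl fun u _ => sum_comm).trans sum_comm)

lemma isIsotropic_of_orthonormal {ι : Type*} [Fintype ι] [DecidableEq ι] {f : ι → V → ℝ}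
    (hf : ∀ i j, degInner w (f i) (f j) = if i = j then 1 else 0) :
    IsIsotropic (deg w) fun v => WithLp.toLp 2 fun j => f j v := by
  intro y
  have hexpand (v) : deg w v * inner ℝ y (WithLp.toLp 2 fun j => f j v) ^ 2 =
      ∑ i, ∑ j, y i * y j * (deg w v * (f i v * f j v)) := by
    simp only [PiLp.inner_apply, RCLike.inner_apply, conj_trivial]
    rw [sq, sum_mul_sum, mul_sum]
    simp only [mul_sum]
    exact sum_congr rfl fun i _ => sum_congr rfl fun j _ => by ring
  calc ∑ v, deg w v * inner ℝ y (WithLp.toLp 2 fun j => f j v) ^ 2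
      = ∑ i, ∑ j, y i * y j * degInner w (f i) (f j) := by
        simp only [hexpand, degInner, mul_sum]
        rw [sum_comm]
        exact sum_congr rfl fun i _ => sum_comm
    _ = ‖y‖ ^ 2 := by
        rw [EuclideanSpace.norm_sq_eq]
        simp [hf, sq]

lemma IsIsotropic.exists_disjoint_support_energy_le (hnonneg : ∀ u v, 0 ≤ w u v)
    (hdeg : ∀ v, 0 < deg w v) {m : ℕ} (hm : m ≠ 0) {F : V → EuclideanSpace ℝ (Fin m)}
    (hF : IsIsotropic (deg w) F) :
    ∃ f : Fin m → V → ℝ,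
      (Pairwise fun i j => Disjoint (Function.support (f i)) (Function.support (f j))) ∧
      ∀ i, 1 / 2 ≤ degNormSq w (f i) ∧ energy w (f i) ≤ (33 * (m : ℝ) ^ 3) ^ 2 * energy w F := by
  obtain ⟨K, hmass, hfar⟩ := hF.exists_separated_clusters hm fun v => (hdeg v).le
  have hm1 : (1 : ℝ) ≤ (m : ℝ) ^ 3 := one_le_pow₀ (by exact_mod_cast hm.bot_lt)
  set L : ℝ := 16 * (m : ℝ) ^ 3 with hL
  let dirs (i : Fin m) : Set (EuclideanSpace ℝ (Fin m)) :=
    (fun v => NormedSpace.normalize (F v)) '' K i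
  have hdirs (i) : (dirs i).Nonempty :=
    (Finset.coe_nonempty.2 <| nonempty_of_sum_ne_zero
      (lt_of_lt_of_le (by norm_num) (hmass i)).ne').image _
  have hsep {i j} (hij : i ≠ j) : ∀ y ∈ dirs i, ∀ z ∈ dirs j, 2 / L ≤ dist y z := by
    rintro _ ⟨u, hu, rfl⟩ _ ⟨v, hv, rfl⟩
    have hval : 2 / L = 1 / (8 * (m : ℝ) ^ 3) := by
      rw [hL]
      field_simp
      norm_num
    exact hval ▸ (hfar i j hij u hu v hv).trans_eq (dist_eq_norm _ _).symm
  refine ⟨fun i v => conicalBump L (dirs i) (F v), fun i j hij => ?_, fun i => ⟨?_, ?_⟩⟩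
  · have := disjoint_support_conicalBump (by positivity) (hdirs i) (hdirs j) (hsep hij)
    exact Disjoint.preimage F this
  · refine (hmass i).trans ((sum_le_sum fun v hv => ?_).trans
      (sum_le_univ_sum_of_nonneg fun v => mul_nonneg (hdeg v).le (sq_nonneg _)))
    have hbump : conicalBump L (dirs i) (F v) = ‖F v‖ :=
      conicalBump_of_normalize_mem (Set.mem_image_of_mem _ hv)
    simp only [hbump, norm_norm, le_refl]
  · refine energy_le_sq_mul_energy hnonneg fun u v =>
      (abs_conicalBump_sub_le (by positivity) _ _).trans ?_
    gcongr
    linarith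

variable [DecidableEq V]

lemma hasSparseFamily_of_disjoint_support (hsymm : ∀ u v, w u v = w v u)
    (hnonneg : ∀ u v, 0 ≤ w u v) (hdeg : ∀ v, 0 < deg w v) {m : ℕ} {f : Fin m → V → ℝ}
    (hf : Pairwise fun i j => Disjoint (Function.support (f i)) (Function.support (f j)))
    (hpos : ∀ i, 0 < degNormSq w (f i)) {R : ℝ}
    (henergy : ∀ i, energy w (f i) ≤ R * degNormSq w (f i)) : HasSparseFamily w m √(2 * R) := by
  choose S hS hSf hcut using fun i =>
    exists_subset_support_cut_le hsymm hnonneg hdeg (hpos i) (henergy i)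
  refine ⟨S, hS, fun i j hij => Finset.disjoint_left.2 fun v hi hj => ?_, hcut⟩
  exact Set.disjoint_left.1 (hf hij) (hSf i v hi) (hSf j v hj)

lemma exists_isIsotropic_energy_le (hsymm : ∀ u v, w u v = w v u) (hdeg : ∀ v, 0 < deg w v) {m : ℕ}
    (hcard : m ≤ Fintype.card V) :
    ∃ F : V → EuclideanSpace ℝ (Fin m), IsIsotropic (deg w) F ∧ energy w F ≤ m * lam w m := by
  obtain ⟨x, hx⟩ := exists_isEigenbasis hsymm hdeg
  have hortho (i j : Fin m) : degInner w (x (i.castLE hcard)) (x (j.castLE hcard)) =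
      if i = j then 1 else 0 := by
    simp only [hx.orthonormal, Fin.castLE_inj]
  refine ⟨_, isIsotropic_of_orthonormal hortho, ?_⟩
  calc energy w (fun v => WithLp.toLp 2 fun j : Fin m => x (j.castLE hcard) v)
      = ∑ j : Fin m, lam w (j + 1) := by
        rw [energy_euclideanSpace]
        exact sum_congr rfl fun j _ => by simp [hx.energy_eq, hx.orthonormal]
    _ ≤ ∑ _j : Fin m, lam w m := by
        gcongr with j
        exact lam_le_lam hsymm (by omega) (by omega) hcard
    _ = m * lam w m := by simp

lemma hasSparseFamily_sqrt_lam (hsymm : ∀ u v, w u v = w v u) (hnonneg : ∀ u v, 0 ≤ w u v)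
    (hdeg : ∀ v, 0 < deg w v) {m : ℕ} (hm : m ≠ 0) (hcard : m ≤ Fintype.card V) :
    HasSparseFamily w m (66 * (m : ℝ) ^ 4 * √(lam w m)) := by
  obtain ⟨F, hF, henergy⟩ := exists_isIsotropic_energy_le hsymm hdeg hcard
  obtain ⟨f, hf, hmass⟩ := hF.exists_disjoint_support_energy_le hnonneg hdeg hm
  have hm1 : (1 : ℝ) ≤ m := by exact_mod_cast hm.bot_lt
  set R : ℝ := 2 * ((33 * (m : ℝ) ^ 3) ^ 2 * energy w F) with hR
  have hE : 0 ≤ energy w F := energy_nonneg hnonneg F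
  refine (hasSparseFamily_of_disjoint_support hsymm hnonneg hdeg hf
    (fun i => lt_of_lt_of_le (by norm_num) (hmass i).1) (R := R) fun i => ?_).mono_right hdeg ?_
  · have := mul_le_mul_of_nonneg_left (hmass i).1 (show 0 ≤ R by positivity)
    linarith [(hmass i).2]
  · calc √(2 * R) = √((66 * (m : ℝ) ^ 3) ^ 2 * energy w F) := by rw [hR]; ring_nf
      _ = 66 * (m : ℝ) ^ 3 * √(energy w F) := by
          rw [Real.sqrt_mul (by positivity), Real.sqrt_sq (by positivity)]
      _ ≤ 66 * (m : ℝ) ^ 3 * (m * √(lam w m)) := by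
          gcongr
          refine (Real.sqrt_le_sqrt henergy).trans ?_
          rw [Real.sqrt_mul m.cast_nonneg]
          gcongr
          exact Real.sqrt_le_self_iff.2 (Or.inr hm1)
      _ = 66 * (m : ℝ) ^ 4 * √(lam w m) := by ring

end SpectralEmbedding

/-! ### The conductance gap -/

section Gap

variable {V : Type*} [Fintype V] [DecidableEq V] {w : V → V → ℝ}

lemma HasSparseFamily.min {m : ℕ} {r r' : ℝ} (h : HasSparseFamily w m r)
    (h' : HasSparseFamily w m r') : HasSparseFamily w m (min r r') := by
  rcases min_choice r r' with hmin | hmin <;> rwa [hmin]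

lemma lam_le_two (hsymm : ∀ u v, w u v = w v u) (hnonneg : ∀ u v, 0 ≤ w u v)
    (hdeg : ∀ v, 0 < deg w v) {k : ℕ} (hk : 1 ≤ k) (hcard : k ≤ Fintype.card V) :
    lam w k ≤ 2 := by
  simpa using (hasSparseFamily_of_le_card hnonneg hcard).lam_le hsymm hnonneg hdeg hk hcard

lemma exists_hasSparseFamily_not_succ [Nonempty V] (hdeg : ∀ v, 0 < deg w v) {t : ℕ → ℝ}
    (ht : 0 ≤ t 1) {k : ℕ} (hk : 1 ≤ k) (hlast : ¬ HasSparseFamily w k (t k)) :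
    ∃ ℓ, 1 ≤ ℓ ∧ ℓ < k ∧ HasSparseFamily w ℓ (t ℓ) ∧ ¬ HasSparseFamily w (ℓ + 1) (t (ℓ + 1)) := by
  by_contra! hall
  have hupto (j : ℕ) (hj : 1 ≤ j) : j ≤ k → HasSparseFamily w j (t j) := by
    induction j, hj using Nat.le_induction with
    | base => exact fun _ => hasSparseFamily_one hdeg ht
    | succ j hj ih => exact fun hjk => hall j hj hjk (ih (by omega))
  exact hlast (hupto k hk le_rfl)

lemma exists_hasSparseFamily_gap (hsymm : ∀ u v, w u v = w v u) (hnonneg : ∀ u v, 0 ≤ w u v)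
    (hdeg : ∀ v, 0 < deg w v) {k : ℕ} (hk : 1 ≤ k) (hlam : 0 < lam w k) :
    ∃ ℓ ρ, 1 ≤ ℓ ∧ ℓ < k ∧ lam w k / 8 ≤ ρ ∧ ρ ≤ 1 ∧
      HasSparseFamily w ℓ (ρ - lam w k / (8 * k)) ∧ ¬ HasSparseFamily w (ℓ + 1) ρ := by
  have hk0 : (0 : ℝ) < k := by exact_mod_cast hk
  have hcard := le_card_of_lam_pos hk hlam
  have : Nonempty V := Fintype.card_pos_iff.1 (hk.trans hcard)
  -- The whole vertex set meets the first threshold, and `ρ(k) ≥ λ_k / 2` excludes the last one.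
  let t (j : ℕ) : ℝ := lam w k / 8 * (1 + j / k)
  have hstep (j : ℕ) : t (j + 1) - lam w k / (8 * k) = t j := by
    simp only [t]
    field_simp
    push_cast
    ring
  have htk : t k = lam w k / 4 := by
    simp only [t, div_self hk0.ne']
    ring
  obtain ⟨ℓ, hℓ, hℓk, hhas, hnot⟩ : ∃ ℓ, 1 ≤ ℓ ∧ ℓ < k ∧ HasSparseFamily w ℓ (t ℓ) ∧
      ¬ HasSparseFamily w (ℓ + 1) (t (ℓ + 1)) :=
    exists_hasSparseFamily_not_succ hdeg (by positivity) hk fun h => by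
      linarith [h.lam_le hsymm hnonneg hdeg hk hcard]
  refine ⟨ℓ, t (ℓ + 1), hℓ, hℓk, ?_, ?_, by rwa [hstep], hnot⟩
  · exact le_mul_of_one_le_right (by positivity) (le_add_of_nonneg_right (by positivity))
  · have hmono : t (ℓ + 1) ≤ t k := by
      simp only [t]
      gcongr
      exact hℓk
    linarith [lam_le_two hsymm hnonneg hdeg hk hcard]

lemma exists_hasSparseFamily_gap_le_sqrt_lam (hsymm : ∀ u v, w u v = w v u)
    (hnonneg : ∀ u v, 0 ≤ w u v) (hdeg : ∀ v, 0 < deg w v) {k : ℕ} (hk : 2 ≤ k)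
    (hlam : 0 < lam w k) :
    ∃ ℓ σ ρ, 1 ≤ ℓ ∧ ℓ < k ∧ 0 ≤ σ ∧ σ ≤ 66 * (k : ℝ) ^ 4 * √(lam w (k - 1)) ∧
      lam w k / 8 ≤ ρ ∧ ρ ≤ 1 ∧ lam w k / (8 * k) ≤ ρ - σ ∧
      HasSparseFamily w ℓ σ ∧ ¬ HasSparseFamily w (ℓ + 1) ρ := by
  have hk1 : 1 ≤ k := by omega
  have hcard := le_card_of_lam_pos hk1 hlam
  obtain ⟨ℓ, ρ, hℓ, hℓk, hρ, hρ1, hsparse, hmax⟩ :=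
    exists_hasSparseFamily_gap hsymm hnonneg hdeg hk1 hlam
  have hcheeger : HasSparseFamily w ℓ (66 * (k : ℝ) ^ 4 * √(lam w (k - 1))) := by
    refine ((hasSparseFamily_sqrt_lam hsymm hnonneg hdeg (m := k - 1) (by omega)
      (by omega)).mono_left (Nat.le_sub_one_of_lt hℓk)).mono_right hdeg ?_
    gcongr
    omega
  have hstep : lam w k / (8 * k) ≤ lam w k / 8 := by
    gcongr
    exact le_mul_of_one_le_right (by norm_num) (by exact_mod_cast hk1)
  exact ⟨ℓ, _, ρ, hℓ, hℓk, le_min (by linarith) (by positivity), min_le_right _ _, hρ, hρ1,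
    le_sub_comm.1 (min_le_left _ _), hsparse.min hcheeger, hmax⟩

end Gap

theorem stmt13_general {V : Type*} [Fintype V] [DecidableEq V] {w : V → V → ℝ}
    (hsymm : ∀ u v, w u v = w v u) (hnonneg : ∀ u v, 0 ≤ w u v) (hdeg : ∀ v, 0 < deg w v)
    {k : ℕ} (hk : 2 ≤ k) (hlam : 0 < lam w k) :
    ∃ (ℓ : ℕ) (P : Fin ℓ → Finset V), 1 ≤ ℓ ∧ ℓ < k ∧ (∀ i, (P i).Nonempty) ∧
      (∀ i j, i ≠ j → Disjoint (P i) (P j)) ∧ (∀ v : V, ∃ i, v ∈ P i) ∧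
      ∀ i, inCondGE w (P i) (lam w k ^ 2 / (384 * (k : ℝ) ^ 2)) ∧
        phi w (P i) ≤ 66 * (k : ℝ) ^ 5 * √(lam w (k - 1)) := by
  obtain ⟨ℓ, σ, ρ, hℓ, hℓk, hσ, hσle, hρ, hρ1, hgap, hsparse, hmax⟩ :=
    exists_hasSparseFamily_gap_le_sqrt_lam hsymm hnonneg hdeg hk hlam
  have hℓkR : (ℓ : ℝ) ≤ k := by exact_mod_cast hℓk.le
  have hα : 2 * (lam w k / (16 * k)) = lam w k / (8 * k) := by ring
  obtain ⟨c, hc⟩ := exists_partition_of_conductance_gap hsymm hnonneg hdeg (by omega) hσ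
    (by positivity) hρ1 (hα.trans_le hgap) hsparse hmax
  have hρ0 : 0 ≤ ρ := by linarith
  refine ⟨ℓ, labelClass c, hℓ, hℓk, fun i => (hc i).1, fun i j hij => disjoint_labelClass hij,
    fun v => ⟨c v, mem_labelClass.2 rfl⟩,
    fun i => ⟨(hc i).2.1.mono hnonneg ?_, (hc i).2.2.trans ?_⟩⟩
  · calc lam w k ^ 2 / (384 * (k : ℝ) ^ 2)
        = lam w k / (16 * k) * (lam w k / 8) / (3 * k) := by ring
      _ ≤ lam w k / (16 * k) * ρ / (3 * ℓ) := by gcongr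
  · calc ℓ * σ ≤ k * (66 * (k : ℝ) ^ 4 * √(lam w (k - 1))) := by gcongr
      _ = 66 * (k : ℝ) ^ 5 * √(lam w (k - 1)) := by ring

theorem stmt13 :
    ∃ C : ℝ, 0 < C ∧
      ∀ (V : Type) [Fintype V] [DecidableEq V] (w : V → V → ℝ),
        (∀ u v, w u v = w v u) → (∀ u v, 0 ≤ w u v) → (∀ v, 0 < deg w v) →
        ∀ k : ℕ, 2 ≤ k → 0 < lam w k →
        ∃ (ℓ : ℕ) (P : Fin ℓ → Finset V), 1 ≤ ℓ ∧ ℓ < k ∧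
          (∀ i, (P i).Nonempty) ∧
          (∀ i j, i ≠ j → Disjoint (P i) (P j)) ∧
          (∀ v : V, ∃ i, v ∈ P i) ∧
          (∀ i, inCondGE w (P i) (lam w k ^ 2 / (78400 * (k : ℝ) ^ 4)) ∧
            phi w (P i) ≤ C * (k : ℝ) ^ 6 * Real.sqrt (lam w (k - 1))) := by
  refine ⟨66, by norm_num, fun V _ _ w hsymm hnonneg hdeg k hk hlam => ?_⟩
  obtain ⟨ℓ, P, hℓ, hℓk, hne, hdisj, hcover, hP⟩ := stmt13_general hsymm hnonneg hdeg hk hlam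
  have hkR : (1 : ℝ) ≤ k := by exact_mod_cast (by omega : 1 ≤ k)
  refine ⟨ℓ, P, hℓ, hℓk, hne, hdisj, hcover,
    fun i => ⟨(hP i).1.mono hnonneg ?_, (hP i).2.trans ?_⟩⟩
  · gcongr <;> norm_num
  · gcongr
    norm_num
end
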